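/- arXiv:2105.08860 — 2 statements merged into one kernel-verified Lean document; each statement's English description precedes it below -/
import Mathlib

section
/- Let s > 2 be a square-free integer with s ∉ {3, 5, 7} such that K = ℚ(√2, √s) is none of ℚ(√2,√3), ℚ(√2,√5), ℚ(√2,√7). Then the Pythagoras number of O_K is at least 5. In particular, for odd s with s ≡ 1 (mod 4) and s ≠ 13 the element 1² + (1−√2)² + (2−√2)² + (1/2 + √2 + √s/2)² + ((−1+√2−√s+√(2s))/2)² has length exactly 5, and for s ≡ 3 (mod 4) the element 1² + (√2)² + (1−√2)² + (1 + (−√2−√(2s))/2)² + (√2/2 − √s + √(2s)/2)² has length exactly 5. -/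
/-!
Write an element of `K = ℚ(√2, √s)`, `s` odd, as `(A + B√s)/m` with `A, B ∈ ℚ(√2)`, where `m = 2`
for `s ≡ 1` and `m = √2` for `s ≡ 3 (mod 4)`. For algebraic integers `A, B` lie in `ℤ[√2]`, with
`A ≡ B (mod 2)`, respectively `A ≡ B (mod √2)`
(`coords_one`, `coords_three`). Since `1, √2, √s, √(2s)` are linearly independent over `ℚ`,
a representation of the element `α` in question as a sum of four squares amounts to the system
`∑ A² + s ∑ B² = Γ₀ + s (4 - 2√2)`, `∑ A B = C` over `ℤ[√2]`, which is the integral system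
`IsRep`.

Put `γ = ∑ B²`. The congruence and the evenness of the rational part of `C` make the rational part
of `γ` even, and positivity of `∑ A²`, of `γ` and of the Gram determinant `(∑ A²) γ - C²` under both
embeddings of `ℚ(√2)` leaves only `γ = 4 - 2√2` (`uw_eq`). This forces `B = (1, 1 - √2, 0, 0)` up
to order and signs (`shape`). Then `∑ A B = C` and the bound on `∑ A²` leave two possible
values for the pair `A₁, A₂`, and in both cases `A₃² + A₄²` would have to be a fixed multiple of
`10 - 6√2` or of `6 - 2√2`, neither of which is a sum of two squares in `ℤ[√2]`.

For `s = 13` the element given for `s ≡ 1 (mod 4)` is a sum of four squares, and another one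
is used (`exists_thirteen`). For even `s = 2t` one has `ℚ(√2, √s) = ℚ(√2, √t)`.
-/

/-- The totally real biquadratic field `ℚ(√p, √q)` as a subfield of `ℝ`. -/
noncomputable def biqField (p q : ℕ) : IntermediateField ℚ ℝ :=
  IntermediateField.adjoin ℚ {Real.sqrt p, Real.sqrt q}

/-- The ring of integers of a subfield `K` of `ℝ`, viewed as the set of elements
of `K` that are integral over `ℤ`. -/
def ringOfInt (K : IntermediateField ℚ ℝ) : Set ℝ :=
  {x : ℝ | x ∈ K ∧ IsIntegral ℤ x}

/-- `α` is a sum of `n` squares of elements of `S`. -/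
def SumOfNSquaresIn (S : Set ℝ) (n : ℕ) (α : ℝ) : Prop :=
  ∃ x : Fin n → ℝ, (∀ i, x i ∈ S) ∧ α = ∑ i, x i ^ 2

/-- `α` is a sum of squares of elements of `S`. -/
def IsSumOfSquaresIn (S : Set ℝ) (α : ℝ) : Prop := ∃ n, SumOfNSquaresIn S n α

/-- `K` is a totally real biquadratic field. -/
def IsBiquadratic (K : IntermediateField ℚ ℝ) : Prop :=
  ∃ p q : ℕ, Squarefree p ∧ Squarefree q ∧ 1 < p ∧ 1 < q ∧ p ≠ q ∧ K = biqField p q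

/-! ### The Diophantine system -/

/-- An element of `ℤ[√2]` that is nonnegative under both embeddings has nonnegative rational part
and nonnegative norm. -/
lemma pos_pair {P Q : ℤ} (h1 : (0:ℝ) ≤ P + Q * √2) (h2 : (0:ℝ) ≤ P - Q * √2) :
    0 ≤ P ∧ 2 * Q ^ 2 ≤ P ^ 2 := by
  have hr : (√2:ℝ) ^ 2 = 2 := Real.sq_sqrt (by norm_num)
  constructor
  · have : (0:ℝ) ≤ P := by linarith
    exact_mod_cast this
  · have h : (2:ℝ) * Q ^ 2 ≤ P ^ 2 := by nlinarith [mul_nonneg h1 h2]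
    exact_mod_cast h

/-- With `A i = a i + b i √2` and `B i = c i + d i √2` one has `∑ A² = U + 2W√2`, `∑ B² = u + 2w√2`
and `∑ A B = C₁ + C₂√2`. Both sums of squares and, by Cauchy-Schwarz, the determinant
`(∑ A²)(∑ B²) - (∑ A B)²` are nonnegative under both embeddings of `ℤ[√2]`. -/
lemma gram_bounds (a b c d : Fin 4 → ℤ) {U W u w C₁ C₂ : ℤ}
    (hU : ∑ i, (a i ^ 2 + 2 * b i ^ 2) = U) (hW : ∑ i, a i * b i = W)
    (hu : ∑ i, (c i ^ 2 + 2 * d i ^ 2) = u) (hw : ∑ i, c i * d i = w)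
    (h₁ : ∑ i, (a i * c i + 2 * (b i * d i)) = C₁)
    (h₂ : ∑ i, (a i * d i + b i * c i) = C₂) :
    (0 ≤ U ∧ 2 * (2 * W) ^ 2 ≤ U ^ 2) ∧ (0 ≤ u ∧ 2 * (2 * w) ^ 2 ≤ u ^ 2) ∧
      (0 ≤ U * u + 8 * W * w - C₁ ^ 2 - 2 * C₂ ^ 2 ∧
        2 * (2 * U * w + 2 * W * u - 2 * C₁ * C₂) ^ 2 ≤
          (U * u + 8 * W * w - C₁ ^ 2 - 2 * C₂ ^ 2) ^ 2) := by
  have key : ∀ r : ℝ, r ^ 2 = 2 → (0:ℝ) ≤ U + (2 * W) * r ∧ (0:ℝ) ≤ u + (2 * w) * r ∧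
      (0:ℝ) ≤ (U * u + 8 * W * w - C₁ ^ 2 - 2 * C₂ ^ 2) +
        (2 * U * w + 2 * W * u - 2 * C₁ * C₂) * r := by
    intro r hr
    have eU : (U:ℝ) + (2 * W) * r = ∑ i, ((a i : ℝ) + b i * r) ^ 2 := by
      rw [← hU, ← hW]; push_cast
      simp only [Fin.sum_univ_four]
      linear_combination (-(b 0:ℝ)^2-(b 1:ℝ)^2-(b 2:ℝ)^2-(b 3:ℝ)^2) * hr
    have eu : (u:ℝ) + (2 * w) * r = ∑ i, ((c i : ℝ) + d i * r) ^ 2 := by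
      rw [← hu, ← hw]; push_cast
      simp only [Fin.sum_univ_four]
      linear_combination (-(d 0:ℝ)^2-(d 1:ℝ)^2-(d 2:ℝ)^2-(d 3:ℝ)^2) * hr
    have eC : (C₁:ℝ) + C₂ * r = ∑ i, ((a i : ℝ) + b i * r) * ((c i : ℝ) + d i * r) := by
      rw [← h₁, ← h₂]; push_cast
      simp only [Fin.sum_univ_four]
      linear_combination (-(b 0:ℝ)*d 0-(b 1:ℝ)*d 1-(b 2:ℝ)*d 2-(b 3:ℝ)*d 3) * hr
    have cs := Finset.sum_mul_sq_le_sq_mul_sq Finset.univ (fun i => (a i : ℝ) + b i * r)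
      (fun i => (c i : ℝ) + d i * r)
    rw [← eU, ← eu, ← eC] at cs
    refine ⟨?_, ?_, ?_⟩
    · rw [eU]; positivity
    · rw [eu]; positivity
    · linear_combination cs + (4*(W:ℝ) * w - C₂^2) * hr
  have hr : (√2:ℝ) ^ 2 = 2 := Real.sq_sqrt (by norm_num)
  obtain ⟨p1, p2, p3⟩ := key (√2) hr
  obtain ⟨m1, m2, m3⟩ := key (-√2) (by rw [neg_sq]; exact hr)
  refine ⟨pos_pair ?_ ?_, pos_pair ?_ ?_, pos_pair ?_ ?_⟩ <;> push_cast <;> linarith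

/-- For `A i = a i + b i √2` and `B i = c i + d i √2` in `ℤ[√2]`, the system
`∑ A² + s ∑ B² = (U₀ + 2W₀√2) + s (4 - 2√2)`, `∑ A B = C₁ + C₂√2` written out in coordinates,
together with `A i ≡ B i (mod √2)`. -/
def IsRep (s U₀ W₀ C₁ C₂ : ℤ) (a b c d : Fin 4 → ℤ) : Prop :=
  ∑ i, (a i ^ 2 + 2 * b i ^ 2) + s * ∑ i, (c i ^ 2 + 2 * d i ^ 2) = U₀ + 4 * s ∧
  ∑ i, a i * b i + s * ∑ i, c i * d i = W₀ - s ∧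
  ∑ i, (a i * c i + 2 * (b i * d i)) = C₁ ∧
  ∑ i, (a i * d i + b i * c i) = C₂ ∧
  ∀ i, (2:ℤ) ∣ a i - c i

/-- From `A ≡ B (mod √2)` follows that `∑ A B` and `∑ B²` have rational parts of equal parity. -/
lemma u_parity {a b c d : Fin 4 → ℤ} (h : ∀ i, (2:ℤ) ∣ a i - c i) {C₁ : ℤ} (hC : (2:ℤ) ∣ C₁)
    (h₁ : ∑ i, (a i * c i + 2 * (b i * d i)) = C₁) :
    (2:ℤ) ∣ ∑ i, (c i ^ 2 + 2 * d i ^ 2) := by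
  have : ∑ i, (c i ^ 2 + 2 * d i ^ 2) =
      C₁ - ∑ i, ((a i - c i) * c i + 2 * (b i * d i - d i ^ 2)) := by
    rw [← h₁, ← Finset.sum_sub_distrib]
    exact Finset.sum_congr rfl fun i _ => by ring
  rw [this]
  exact dvd_sub hC (Finset.dvd_sum fun i _ =>
    dvd_add (Dvd.dvd.mul_right (h i) _) (Dvd.intro _ rfl))

/-- For the three families of parameters that occur, `∑ B² = 4 - 2√2`. The three families belong to
`s ≡ 1 (mod 4)` with `s ≠ 13`, to `s = 13`, and to `s ≡ 3 (mod 4)`. -/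
lemma uw_eq {s U₀ W₀ C₁ C₂ : ℤ} {a b c d : Fin 4 → ℤ} (h : IsRep s U₀ W₀ C₁ C₂ a b c d)
    (hp : (17 ≤ s ∧ U₀ = 52 ∧ W₀ = -11 ∧ C₁ = 4 ∧ C₂ = 0) ∨
      (s = 13 ∧ U₀ = 60 ∧ W₀ = -11 ∧ C₁ = 8 ∧ C₂ = -8) ∨
      (11 ≤ s ∧ U₀ = 16 ∧ W₀ = -3 ∧ C₁ = 2 ∧ C₂ = -2)) :
    ∑ i, (c i ^ 2 + 2 * d i ^ 2) = 4 ∧ ∑ i, c i * d i = -1 := by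
  obtain ⟨e1, e2, e3, e4, e5⟩ := h
  obtain ⟨⟨hU, hUW⟩, ⟨hu, huw⟩, hP, hPQ⟩ := gram_bounds a b c d rfl rfl rfl rfl e3 e4
  have hev := u_parity (b := b) (d := d) e5 (C₁ := C₁) (by omega) e3
  generalize ∑ i, (c i ^ 2 + 2 * d i ^ 2) = u at *
  generalize ∑ i, c i * d i = w at *
  generalize ∑ i, (a i ^ 2 + 2 * b i ^ 2) = U at *
  generalize ∑ i, a i * b i = W at *
  clear e3 e4 e5
  obtain rfl : U = U₀ + 4 * s - s * u := by linarith
  obtain rfl : W = W₀ - s - s * w := by linarith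
  clear e1 e2
  -- Finitely many pairs `(u, w)` remain, and each one turns the bounds into inequalities in `s`.
  have hu8 : u ≤ 8 := by
    by_contra hcon
    rcases hp with ⟨h1, rfl, rfl, rfl, rfl⟩ | ⟨rfl, rfl, rfl, rfl, rfl⟩ |
      ⟨h1, rfl, rfl, rfl, rfl⟩ <;> nlinarith
  have hw2 : w ≤ 2 := by nlinarith
  have hw2' : -2 ≤ w := by nlinarith
  obtain ⟨v, rfl⟩ := hev
  have hv : v ≤ 4 := by omega
  have hv0 : 0 ≤ v := by omega
  rcases hp with ⟨h1, rfl, rfl, rfl, rfl⟩ | ⟨rfl, rfl, rfl, rfl, rfl⟩ |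
    ⟨h1, rfl, rfl, rfl, rfl⟩ <;>
  interval_cases v <;> interval_cases w <;> first | omega | (exfalso; nlinarith)

lemma exists_complement (i j : Fin 4) (h : i ≠ j) :
    ∃ k l : Fin 4, ∀ f : Fin 4 → ℤ, ∑ x, f x = f i + f j + f k + f l := by
  have key : ∀ i j : Fin 4, i ≠ j → ∃ k l : Fin 4,
      (Finset.univ : Finset (Fin 4)) = {i, j, k, l} ∧ i ≠ k ∧ i ≠ l ∧ j ≠ k ∧ j ≠ l ∧ k ≠ l := by
    decide
  obtain ⟨k, l, hu, h1, h2, h3, h4, h5⟩ := key i j h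
  refine ⟨k, l, fun f => ?_⟩
  rw [hu, Finset.sum_insert (by simp [h, h1, h2]), Finset.sum_insert (by simp [h3, h4]),
    Finset.sum_insert (by simp [h5]), Finset.sum_singleton]
  ring

/-- If `∑ B² = 4 - 2√2`, then up to order the `B`s are `±1, ±(1 - √2), 0, 0`. The order is encoded by
indices `i, j, k, l` over which every sum splits. -/
lemma shape {c d : Fin 4 → ℤ} (hu : ∑ i, (c i ^ 2 + 2 * d i ^ 2) = 4)
    (hw : ∑ i, c i * d i = -1) :
    ∃ i j k l : Fin 4, (∀ f : Fin 4 → ℤ, ∑ x, f x = f i + f j + f k + f l) ∧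
      (c i = 1 ∨ c i = -1) ∧ d i = 0 ∧ (c j = 1 ∧ d j = -1 ∨ c j = -1 ∧ d j = 1) ∧
      c k = 0 ∧ d k = 0 ∧ c l = 0 ∧ d l = 0 := by
  obtain ⟨j, hj⟩ : ∃ j, c j * d j < 0 := by
    by_contra! hcon
    have := Finset.sum_nonneg (s := Finset.univ) fun i _ => hcon i
    omega
  obtain ⟨i, hi⟩ : ∃ i, i ≠ j := exists_ne j
  obtain ⟨k, l, hs⟩ := exists_complement i j hi
  have eu := hs fun i => c i ^ 2 + 2 * d i ^ 2
  rw [hu] at eu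
  have hcj : c j ≠ 0 := by rintro h; simp [h] at hj
  have hdj : d j ≠ 0 := by rintro h; simp [h] at hj
  have b1 : 0 < c j ^ 2 := by positivity
  have b2 : 0 < d j ^ 2 := by positivity
  have zero : ∀ m : Fin 4, 2 * d m ^ 2 ≤ 1 → d m = 0 := fun m hm => by
    have : d m ^ 2 = 0 := by have := sq_nonneg (d m); omega
    simpa using this
  have q1 := sq_nonneg (c i)
  have q2 := sq_nonneg (c k)
  have q3 := sq_nonneg (c l)
  have q4 := sq_nonneg (d i)
  have q5 := sq_nonneg (d k)
  have q6 := sq_nonneg (d l)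
  have di := zero i (by omega)
  have dk := zero k (by omega)
  have dl := zero l (by omega)
  have dj : d j ^ 2 = 1 := by omega
  have cj : c j = 1 ∨ c j = -1 := by
    have h1 : c j ≤ 1 := by nlinarith
    have h2 : -1 ≤ c j := by nlinarith
    omega
  have hcj1 : c j ^ 2 = 1 := by rcases cj with h | h <;> simp [h]
  have djj : c j = 1 ∧ d j = -1 ∨ c j = -1 ∧ d j = 1 := by
    rcases sq_eq_one_iff.mp dj with h | h <;> rcases cj with h' | h' <;>
      simp [h, h'] at hj ⊢
  simp only [di, dk, dl, dj, hcj1] at eu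
  have bound : ∀ m : Fin 4, c m ^ 2 ≤ 1 → c m = 0 ∨ c m = 1 ∨ c m = -1 := fun m hm => by
    have h1 : c m ≤ 1 := by nlinarith
    have h2 : -1 ≤ c m := by nlinarith
    omega
  rcases bound i (by omega) with ci | ci <;> rcases bound k (by omega) with ck | ck <;>
    rcases bound l (by omega) with cl | cl
  · simp [ci, ck, cl] at eu
  · exact ⟨l, j, k, i, fun f => by rw [hs f]; ring, cl, dl, djj, ck, dk, ci, di⟩
  · exact ⟨k, j, i, l, fun f => by rw [hs f]; ring, ck, dk, djj, ci, di, cl, dl⟩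
  · rcases ck with h | h <;> rcases cl with h' | h' <;> simp [ci, h, h'] at eu
  · exact ⟨i, j, k, l, hs, ci, di, djj, ck, dk, cl, dl⟩
  · rcases ci with h | h <;> rcases cl with h' | h' <;> simp [ck, h, h'] at eu
  · rcases ci with h | h <;> rcases ck with h' | h' <;> simp [cl, h, h'] at eu
  · rcases ci with h | h <;> rcases ck with h' | h' <;> rcases cl with h'' | h'' <;>
      simp [h, h', h''] at eu

/-- `6 - 2√2` is not a sum of two squares in `ℤ[√2]`. -/
lemma two_squares_six (e f g h : ℤ) (h1 : e ^ 2 + 2 * f ^ 2 + g ^ 2 + 2 * h ^ 2 = 6)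
    (h2 : e * f + g * h = -1) : False := by
  have : f ≤ 1 := by nlinarith
  have : -1 ≤ f := by nlinarith
  have : h ≤ 1 := by nlinarith
  have : -1 ≤ h := by nlinarith
  have : e ≤ 2 := by nlinarith
  have : -2 ≤ e := by nlinarith
  have : g ≤ 2 := by nlinarith
  have : -2 ≤ g := by nlinarith
  interval_cases f <;> interval_cases h <;> interval_cases e <;> interval_cases g <;> omega

/-- `10 - 6√2` is not a sum of two squares in `ℤ[√2]`. -/
lemma two_squares_ten (e f g h : ℤ) (h1 : e ^ 2 + 2 * f ^ 2 + g ^ 2 + 2 * h ^ 2 = 10)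
    (h2 : e * f + g * h = -3) : False := by
  have : f ≤ 2 := by nlinarith
  have : -2 ≤ f := by nlinarith
  have : h ≤ 2 := by nlinarith
  have : -2 ≤ h := by nlinarith
  have : e ≤ 3 := by nlinarith
  have : -3 ≤ e := by nlinarith
  have : g ≤ 3 := by nlinarith
  have : -3 ≤ g := by nlinarith
  interval_cases f <;> interval_cases h <;> interval_cases e <;> first | omega |
    (interval_cases g <;> omega)

/-- A sum of two squares in `ℤ[√2]` has nonnegative norm. -/
lemma rest_bound (e f g h : ℤ) :
    8 * (e * f + g * h) ^ 2 ≤ (e ^ 2 + 2 * f ^ 2 + g ^ 2 + 2 * h ^ 2) ^ 2 := by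
  nlinarith [sq_nonneg (e ^ 2 - 2 * f ^ 2), sq_nonneg (g ^ 2 - 2 * h ^ 2),
    sq_nonneg (e * g - 2 * f * h), sq_nonneg (e * h - f * g), sq_nonneg (e * h + f * g),
    sq_nonneg (e * g + 2 * f * h)]

/-- The system with `B = (1, 1 - √2, 0, 0)` for `s ≡ 1 (mod 4)`, `s ≠ 13`: the first two `A`s are
`a₁ + b₁√2` and `a₂ + b₂√2`, the other two are `2(e + f√2)` and `2(g + h√2)`. -/
lemma core_generic (a₁ b₁ a₂ b₂ e f g h : ℤ)
    (hU : a₁ ^ 2 + 2 * b₁ ^ 2 + (a₂ ^ 2 + 2 * b₂ ^ 2) +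
      4 * (e ^ 2 + 2 * f ^ 2 + g ^ 2 + 2 * h ^ 2) = 52)
    (hW : a₁ * b₁ + a₂ * b₂ + 4 * (e * f + g * h) = -11)
    (h₁ : a₁ + a₂ - 2 * b₂ = 4) (h₂ : b₁ - a₂ + b₂ = 0)
    (ha : a₁ % 2 = 1) (hb : b₁ % 2 = 0) : False := by
  have hnm := rest_bound e f g h
  have h0 : 0 ≤ e ^ 2 + 2 * f ^ 2 + g ^ 2 + 2 * h ^ 2 := by positivity
  suffices e ^ 2 + 2 * f ^ 2 + g ^ 2 + 2 * h ^ 2 = 10 ∧ e * f + g * h = -3 from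
    two_squares_ten e f g h this.1 this.2
  generalize e ^ 2 + 2 * f ^ 2 + g ^ 2 + 2 * h ^ 2 = n at *
  generalize e * f + g * h = m at *
  obtain rfl : a₂ = a₁ + 2 * b₁ - 2 * (0) - 4 := by omega
  obtain rfl : b₂ = a₁ + b₁ - (0) - 4 := by omega
  have hx1 : a₁ ≤ 7 := by nlinarith
  have hx2 : -7 ≤ a₁ := by nlinarith
  have hy1 : b₁ ≤ 5 := by nlinarith
  have hy2 : -5 ≤ b₁ := by nlinarith
  interval_cases a₁ <;> first | omega | skip
  all_goals interval_cases b₁ <;> first | omega | (exfalso; nlinarith)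

/-- As `core_generic`, for `s = 13`. -/
lemma core_thirteen (a₁ b₁ a₂ b₂ e f g h : ℤ)
    (hU : a₁ ^ 2 + 2 * b₁ ^ 2 + (a₂ ^ 2 + 2 * b₂ ^ 2) +
      4 * (e ^ 2 + 2 * f ^ 2 + g ^ 2 + 2 * h ^ 2) = 60)
    (hW : a₁ * b₁ + a₂ * b₂ + 4 * (e * f + g * h) = -11)
    (h₁ : a₁ + a₂ - 2 * b₂ = 8) (h₂ : b₁ - a₂ + b₂ = -8)
    (ha : a₁ % 2 = 1) (hb : b₁ % 2 = 0) : False := by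
  have hnm := rest_bound e f g h
  have h0 : 0 ≤ e ^ 2 + 2 * f ^ 2 + g ^ 2 + 2 * h ^ 2 := by positivity
  suffices e ^ 2 + 2 * f ^ 2 + g ^ 2 + 2 * h ^ 2 = 6 ∧ e * f + g * h = -1 from
    two_squares_six e f g h this.1 this.2
  generalize e ^ 2 + 2 * f ^ 2 + g ^ 2 + 2 * h ^ 2 = n at *
  generalize e * f + g * h = m at *
  obtain rfl : a₂ = a₁ + 2 * b₁ - 2 * (-8) - 8 := by omega
  obtain rfl : b₂ = a₁ + b₁ - (-8) - 8 := by omega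
  have hx1 : a₁ ≤ 7 := by nlinarith
  have hx2 : -7 ≤ a₁ := by nlinarith
  have hy1 : b₁ ≤ 5 := by nlinarith
  have hy2 : -5 ≤ b₁ := by nlinarith
  interval_cases a₁ <;> first | omega | skip
  all_goals interval_cases b₁ <;> first | omega | (exfalso; nlinarith)

/-- The system with `B = (1, 1 - √2, 0, 0)` for `s ≡ 3 (mod 4)`. The last two `A`s are divisible by
`√2` and written as `√2(e + f√2)` and `√2(g + h√2)`. -/
lemma core_three (a₁ b₁ a₂ b₂ e f g h : ℤ)
    (hU : a₁ ^ 2 + 2 * b₁ ^ 2 + (a₂ ^ 2 + 2 * b₂ ^ 2) +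
      2 * (e ^ 2 + 2 * f ^ 2 + g ^ 2 + 2 * h ^ 2) = 16)
    (hW : a₁ * b₁ + a₂ * b₂ + 2 * (e * f + g * h) = -3)
    (h₁ : a₁ + a₂ - 2 * b₂ = 2) (h₂ : b₁ - a₂ + b₂ = -2)
    (ha : a₁ % 2 = 1) : False := by
  have hnm := rest_bound e f g h
  have h0 : 0 ≤ e ^ 2 + 2 * f ^ 2 + g ^ 2 + 2 * h ^ 2 := by positivity
  suffices e ^ 2 + 2 * f ^ 2 + g ^ 2 + 2 * h ^ 2 = 6 ∧ e * f + g * h = -1 from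
    two_squares_six e f g h this.1 this.2
  generalize e ^ 2 + 2 * f ^ 2 + g ^ 2 + 2 * h ^ 2 = n at *
  generalize e * f + g * h = m at *
  obtain rfl : a₂ = a₁ + 2 * b₁ - 2 * (-2) - 2 := by omega
  obtain rfl : b₂ = a₁ + b₁ - (-2) - 2 := by omega
  have hx1 : a₁ ≤ 7 := by nlinarith
  have hx2 : -7 ≤ a₁ := by nlinarith
  have hy1 : b₁ ≤ 5 := by nlinarith
  have hy2 : -5 ≤ b₁ := by nlinarith
  interval_cases a₁ <;> first | omega | skip
  all_goals interval_cases b₁ <;> first | omega | (exfalso; nlinarith)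

lemma no_rep {s U₀ W₀ C₁ C₂ : ℤ} {a b c d : Fin 4 → ℤ} (h : IsRep s U₀ W₀ C₁ C₂ a b c d)
    (hp : ((17 ≤ s ∧ U₀ = 52 ∧ W₀ = -11 ∧ C₁ = 4 ∧ C₂ = 0) ∧ ∀ i, (2:ℤ) ∣ b i - d i) ∨
      ((s = 13 ∧ U₀ = 60 ∧ W₀ = -11 ∧ C₁ = 8 ∧ C₂ = -8) ∧ ∀ i, (2:ℤ) ∣ b i - d i) ∨
      (11 ≤ s ∧ U₀ = 16 ∧ W₀ = -3 ∧ C₁ = 2 ∧ C₂ = -2)) : False := by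
  obtain ⟨hu, hw⟩ := uw_eq h (by tauto)
  obtain ⟨e1, e2, e3, e4, e5⟩ := h
  obtain ⟨i, j, k, l, hs, ci, di, cj, ck, dk, cl, dl⟩ := shape hu hw
  rw [hu] at e1
  rw [hw] at e2
  simp only [hs] at e1 e2 e3 e4
  have ai := e5 i
  obtain ⟨e, ae⟩ := e5 k
  obtain ⟨g, ag⟩ := e5 l
  rw [ck, sub_zero] at ae
  rw [cl, sub_zero] at ag
  simp only [ck, dk, cl, dl, di, ae, ag] at e1 e2 e3 e4
  -- Replacing a pair `(A, B)` by `(-A, -B)` preserves the system, so `B i` may be taken to be `1`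
  -- and `B j` to be `1 - √2`.
  obtain ⟨x, y, exy, hxy, e₃, e₄, hx2, hy2⟩ : ∃ x y : ℤ,
      x ^ 2 + 2 * y ^ 2 = a i ^ 2 + 2 * b i ^ 2 ∧
      x * y = a i * b i ∧ x = a i * c i ∧ y = b i * c i ∧ x % 2 = 1 ∧ y % 2 = b i % 2 := by
    rcases ci with hc | hc <;> rw [hc] at ai ⊢ <;>
      exact ⟨_, _, by ring, by ring, rfl, rfl, by omega, by omega⟩
  obtain ⟨z, t, ezt, hzt, e₅, e₆, e₇, e₈⟩ : ∃ z t : ℤ,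
      z ^ 2 + 2 * t ^ 2 = a j ^ 2 + 2 * b j ^ 2 ∧
      z * t = a j * b j ∧ z = a j * c j ∧ t = b j * c j ∧ a j * d j = -z ∧ b j * d j = -t := by
    rcases cj with ⟨hc, hd⟩ | ⟨hc, hd⟩ <;> rw [hc, hd] <;>
      exact ⟨_, _, by ring, by ring, rfl, rfl, by ring, by ring⟩
  simp only [e₇, e₈, ← e₃, ← e₄, ← e₅, ← e₆] at e3 e4
  rcases hp with ⟨⟨h1, rfl, rfl, rfl, rfl⟩, hbd⟩ | ⟨⟨rfl, rfl, rfl, rfl, rfl⟩, hbd⟩ |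
    ⟨h1, rfl, rfl, rfl, rfl⟩
  · obtain ⟨f, bf⟩ := hbd k
    obtain ⟨h, bh⟩ := hbd l
    have hbi := hbd i
    rw [dk, sub_zero] at bf
    rw [dl, sub_zero] at bh
    rw [di, sub_zero] at hbi
    rw [bf, bh] at e1 e2
    exact core_generic x y z t e f g h (by linarith) (by linarith) (by linarith) (by linarith)
      hx2 (by omega)
  · obtain ⟨f, bf⟩ := hbd k
    obtain ⟨h, bh⟩ := hbd l
    have hbi := hbd i
    rw [dk, sub_zero] at bf
    rw [dl, sub_zero] at bh
    rw [di, sub_zero] at hbi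
    rw [bf, bh] at e1 e2
    exact core_thirteen x y z t e f g h (by linarith) (by linarith) (by linarith) (by linarith)
      hx2 (by omega)
  · exact core_three x y z t (b k) e (b l) g (by linarith) (by linarith) (by linarith)
      (by linarith) hx2

/-! ### Integral elements of the biquadratic field -/

/-- The element with rational coordinates `p, q, r, t` with respect to `1, √2, √s, √(2s)`, with
arbitrary reals `α, β` in place of `√2, √s`. Letting `α = ±√2`, `β = ±√s` gives its conjugates. -/
noncomputable def ev (α β : ℝ) (p q r t : ℚ) : ℝ := p + q * α + (r + t * α) * β

lemma ev_add (α β : ℝ) (p₁ q₁ r₁ t₁ p₂ q₂ r₂ t₂ : ℚ) :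
    ev α β p₁ q₁ r₁ t₁ + ev α β p₂ q₂ r₂ t₂ =
      ev α β (p₁ + p₂) (q₁ + q₂) (r₁ + r₂) (t₁ + t₂) := by
  simp only [ev]; push_cast; ring

lemma ev_mul {s : ℕ} {α β : ℝ} (hα : α ^ 2 = 2) (hβ : β ^ 2 = s)
    (p₁ q₁ r₁ t₁ p₂ q₂ r₂ t₂ : ℚ) :
    ev α β p₁ q₁ r₁ t₁ * ev α β p₂ q₂ r₂ t₂ =
      ev α β (p₁ * p₂ + 2 * q₁ * q₂ + s * (r₁ * r₂ + 2 * t₁ * t₂))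
        (p₁ * q₂ + q₁ * p₂ + s * (r₁ * t₂ + t₁ * r₂))
        (p₁ * r₂ + 2 * q₁ * t₂ + r₁ * p₂ + 2 * t₁ * q₂)
        (p₁ * t₂ + q₁ * r₂ + r₁ * q₂ + t₁ * p₂) := by
  simp only [ev]; push_cast
  linear_combination ((q₁ * q₂ : ℝ) + q₁ * t₂ * β + t₁ * q₂ * β + t₁ * t₂ * β ^ 2) * hα +
    ((r₁:ℝ) * r₂ + (r₁ * t₂ + t₁ * r₂) * α + 2 * t₁ * t₂) * hβ

/-- The coordinates of a polynomial value do not depend on the choice of square roots. -/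
lemma ev_poly (s : ℕ) (p q r t : ℚ) (P : Polynomial ℤ) :
    ∃ p' q' r' t' : ℚ, ∀ α β : ℝ, α ^ 2 = 2 → β ^ 2 = s →
      Polynomial.aeval (ev α β p q r t) P = ev α β p' q' r' t' := by
  induction P using Polynomial.induction_on with
  | C z => exact ⟨z, 0, 0, 0, fun α β _ _ => by simp [ev]⟩
  | add P Q hP hQ =>
    obtain ⟨p₁, q₁, r₁, t₁, h₁⟩ := hP
    obtain ⟨p₂, q₂, r₂, t₂, h₂⟩ := hQ
    exact ⟨_, _, _, _, fun α β hα hβ => by rw [map_add, h₁ α β hα hβ, h₂ α β hα hβ, ev_add]⟩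
  | monomial n z ih =>
    obtain ⟨p₁, q₁, r₁, t₁, h₁⟩ := ih
    exact ⟨_, _, _, _, fun α β hα hβ => by
      rw [pow_succ, ← mul_assoc, map_mul, h₁ α β hα hβ, Polynomial.aeval_X, ev_mul hα hβ]⟩

lemma sqrt2_sq : (√2:ℝ) ^ 2 = 2 := Real.sq_sqrt (by norm_num)

lemma irrational_sqrt_of_squarefree {s : ℕ} (hs : Squarefree s) (h1 : 1 < s) :
    Irrational (√(s:ℝ)) := by
  rw [irrational_sqrt_natCast_iff]
  rintro ⟨n, rfl⟩
  have := hs n dvd_rfl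
  simp at this
  subst this
  omega

lemma lin_indep2 {p q : ℚ} (h : (p:ℝ) + q * √2 = 0) : p = 0 ∧ q = 0 := by
  have hq : q = 0 := by
    by_contra hq
    have hq' : (q:ℝ) ≠ 0 := by exact_mod_cast hq
    apply irrational_sqrt_two
    exact ⟨-p / q, by push_cast; field_simp; linarith⟩
  subst hq
  refine ⟨?_, rfl⟩
  have : (p:ℝ) = 0 := by simpa using h
  exact_mod_cast this

lemma lin_indep4 {s : ℕ} (hs : Squarefree s) (h1 : 1 < s) (hodd : s % 2 = 1) {p q r t : ℚ}
    (h : ev (√2) (√s) p q r t = 0) : p = 0 ∧ q = 0 ∧ r = 0 ∧ t = 0 := by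
  have hs0 : (√(s:ℝ)) ^ 2 = s := Real.sq_sqrt (by positivity)
  simp only [ev] at h
  have irr2s : Irrational (√((2 * s : ℕ):ℝ)) := by
    apply irrational_sqrt_of_squarefree _ (by omega)
    rw [Nat.squarefree_mul (by simpa using Nat.odd_iff.mpr hodd)]
    exact ⟨Nat.prime_two.squarefree, hs⟩
  by_cases hrt : (r:ℝ) + t * √2 = 0
  · obtain ⟨rfl, rfl⟩ := lin_indep2 hrt
    obtain ⟨rfl, rfl⟩ := lin_indep2 (p := p) (q := q) (by simpa using h)
    simp
  · exfalso
    -- Otherwise `√s = x + y√2` with rational `x, y`, and squaring gives `xy = 0`.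
    have hN : (r:ℝ) ^ 2 - 2 * t ^ 2 ≠ 0 := by
      intro h0
      have h00 : r ^ 2 - 2 * t ^ 2 = 0 := by exact_mod_cast h0
      have : ((r:ℝ) - t * √2) = 0 := by
        have : ((r:ℝ) + t * √2) * (r - t * √2) = 0 := by
          linear_combination h0 - (t:ℝ) ^ 2 * sqrt2_sq
        exact (mul_eq_zero.mp this).resolve_left hrt
      have := lin_indep2 (p := r) (q := -t) (by push_cast; linarith)
      apply hrt
      obtain ⟨h1, h2⟩ := this
      have : t = 0 := by linarith
      simp [h1, this]
    obtain ⟨x, y, hxy⟩ : ∃ x y : ℚ, √(s:ℝ) = x + y * √2 := by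
      refine ⟨-(p * r - 2 * q * t) / (r ^ 2 - 2 * t ^ 2),
        -(q * r - p * t) / (r ^ 2 - 2 * t ^ 2), ?_⟩
      push_cast
      field_simp
      linear_combination (r - t * √2 : ℝ) * h + (t ^ 2 * √s + t * q:ℝ) * sqrt2_sq
    have e : ((x ^ 2 + 2 * y ^ 2 - s : ℚ):ℝ) + ((2 * x * y : ℚ) : ℝ) * √2 = 0 := by
      push_cast
      rw [hxy] at hs0
      linear_combination hs0 - (y:ℝ) ^ 2 * sqrt2_sq
    obtain ⟨e1, e2⟩ := lin_indep2 e
    rcases mul_eq_zero.mp e2 with hx | hy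
    · have hx : x = 0 := by linarith
      apply irr2s
      refine ⟨2 * y, ?_⟩
      push_cast
      rw [Real.sqrt_mul (by norm_num), hxy, hx]
      push_cast
      linear_combination -(y:ℝ) * sqrt2_sq
    · apply irrational_sqrt_of_squarefree hs h1
      exact ⟨x, by rw [hxy, hy]; simp⟩

lemma conj_integral {s : ℕ} (hs : Squarefree s) (h1 : 1 < s) (hodd : s % 2 = 1) {p q r t : ℚ}
    (h : IsIntegral ℤ (ev (√2) (√s) p q r t)) (α β : ℝ) (hα : α ^ 2 = 2) (hβ : β ^ 2 = s) :
    IsIntegral ℤ (ev α β p q r t) := by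
  obtain ⟨P, hP, h0⟩ := h
  refine ⟨P, hP, ?_⟩
  obtain ⟨p', q', r', t', H⟩ := ev_poly s p q r t P
  have e := H _ _ sqrt2_sq (Real.sq_sqrt (by positivity : (0:ℝ) ≤ s))
  rw [Polynomial.aeval_def, h0] at e
  obtain ⟨rfl, rfl, rfl, rfl⟩ := lin_indep4 hs h1 hodd e.symm
  have e' := H α β hα hβ
  rw [Polynomial.aeval_def] at e'
  rw [e']
  simp [ev]

lemma int_of_integral {x : ℚ} (h : IsIntegral ℤ (x:ℝ)) : ∃ n : ℤ, x = n := by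
  have : IsIntegral ℤ x :=
    (isIntegral_algebraMap_iff (A := ℚ) (B := ℝ) Rat.cast_injective).mp (by simpa using h)
  obtain ⟨n, hn⟩ := IsIntegrallyClosed.isIntegral_iff.mp this
  exact ⟨n, by simpa using hn.symm⟩

lemma int_of_sq_mul {s : ℕ} (hs : Squarefree s) {x : ℚ} {m : ℤ} (h : s * x ^ 2 = m) :
    ∃ n : ℤ, x = n := by
  have hd : (x.den : ℚ) ≠ 0 := by exact_mod_cast x.den_ne_zero
  have e : (s:ℤ) * x.num ^ 2 = m * (x.den:ℤ) ^ 2 := by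
    have : (s:ℚ) * x.num ^ 2 = m * (x.den:ℚ) ^ 2 := by
      rw [← h]
      nth_rewrite 2 [← Rat.num_div_den x]
      field_simp
    exact_mod_cast this
  have hdvd : (x.den : ℤ) ^ 2 ∣ (s:ℤ) := by
    have cop : IsCoprime ((x.den:ℤ) ^ 2) (x.num ^ 2) := by
      apply IsCoprime.pow
      rw [Int.isCoprime_iff_gcd_eq_one, Int.gcd_comm]
      exact x.reduced
    exact cop.dvd_of_dvd_mul_right (Dvd.intro_left _ e.symm)
  have hdn : x.den * x.den ∣ s := by
    rw [← sq]; exact_mod_cast hdvd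
  have : x.den = 1 := by simpa using hs _ hdn
  exact ⟨x.num, (Rat.den_eq_one_iff x).mp this |>.symm⟩

lemma integral_of_eq {x y : ℝ} (hy : IsIntegral ℤ y) (h : x = y) : IsIntegral ℤ x := h ▸ hy

/-- The ring of integers of `ℚ(√2)` is `ℤ[√2]`. -/
lemma int_pair {P Q : ℚ} (h1 : IsIntegral ℤ ((P:ℝ) + Q * √2))
    (h2 : IsIntegral ℤ ((P:ℝ) - Q * √2)) :
    ∃ m n : ℤ, P = m ∧ Q = n := by
  have i2 : IsIntegral ℤ (√2:ℝ) := IsIntegral.of_pow (n := 2) (by norm_num) (by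
    rw [sqrt2_sq]; exact isIntegral_algebraMap (R := ℤ) (x := 2))
  obtain ⟨m, hm⟩ := int_of_integral (x := 2 * P) (by
    refine integral_of_eq (h1.add h2) ?_; push_cast; ring)
  obtain ⟨n, hn⟩ := int_of_integral (x := 4 * Q) (by
    refine integral_of_eq ((h1.sub h2).mul i2) ?_; push_cast
    linear_combination (-2 * (Q:ℝ)) * sqrt2_sq)
  obtain ⟨k, hk⟩ := int_of_integral (x := P ^ 2 - 2 * Q ^ 2) (by
    refine integral_of_eq (h1.mul h2) ?_; push_cast
    linear_combination ((Q:ℝ) ^ 2) * sqrt2_sq)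
  have e : 2 * m ^ 2 - n ^ 2 = 8 * k := by
    have : (2 * m ^ 2 - n ^ 2 : ℚ) = 8 * k := by
      rw [← hm, ← hn, ← hk]; ring
    exact_mod_cast this
  have n2 : 2 ∣ n := by
    have : 2 ∣ n ^ 2 := by omega
    exact Int.prime_two.dvd_of_dvd_pow this
  obtain ⟨n, rfl⟩ := n2
  have m2 : 2 ∣ m := by
    have : 2 ∣ m ^ 2 := by ring_nf at e; omega
    exact Int.prime_two.dvd_of_dvd_pow this
  obtain ⟨m, rfl⟩ := m2
  have n2 : 2 ∣ n := by
    have : 2 ∣ n ^ 2 := by ring_nf at e; omega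
    exact Int.prime_two.dvd_of_dvd_pow this
  obtain ⟨n, rfl⟩ := n2
  refine ⟨m, n, ?_, ?_⟩ <;> push_cast at hm hn <;> linarith

/-- Twice an algebraic integer has integral coordinates. The two divisibilities say that the relative
norm down to `ℚ(√2)` lies in `ℤ[√2]`. -/
lemma half_coords {s : ℕ} (hs : Squarefree s) (h1 : 1 < s) (hodd : s % 2 = 1) {p q r t : ℚ}
    (h : IsIntegral ℤ (ev (√2) (√s) p q r t)) :
    ∃ a b c d : ℤ, 2 * p = a ∧ 2 * q = b ∧ 2 * r = c ∧ 2 * t = d ∧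
      4 ∣ a ^ 2 + 2 * b ^ 2 - s * (c ^ 2 + 2 * d ^ 2) ∧ 2 ∣ a * b - s * (c * d) := by
  have hs0 : (√(s:ℝ)) ^ 2 = s := Real.sq_sqrt (by positivity)
  have C := conj_integral hs h1 hodd h
  have pp := C (√2) (√s) sqrt2_sq hs0
  have pm := C (√2) (-√s) sqrt2_sq (by rw [neg_sq, hs0])
  have mp := C (-√2) (√s) (by rw [neg_sq, sqrt2_sq]) hs0
  have mm := C (-√2) (-√s) (by rw [neg_sq, sqrt2_sq]) (by rw [neg_sq, hs0])
  obtain ⟨a, b, ha, hb⟩ := int_pair (P := 2 * p) (Q := 2 * q)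
    (by refine integral_of_eq (pp.add pm) ?_; simp only [ev]; push_cast; ring)
    (by refine integral_of_eq (mp.add mm) ?_; simp only [ev]; push_cast; ring)
  obtain ⟨m, n, hm, hn⟩ := int_pair (P := s * ((2 * r) ^ 2 + 2 * (2 * t) ^ 2))
    (Q := s * (2 * (2 * r) * (2 * t)))
    (by
      refine integral_of_eq ((pp.sub pm).pow 2) ?_; simp only [ev]; push_cast
      linear_combination (-4 * (r + t * √2 : ℝ) ^ 2) * hs0 - 4 * s * (t:ℝ) ^ 2 * sqrt2_sq)
    (by
      refine integral_of_eq ((mp.sub mm).pow 2) ?_; simp only [ev]; push_cast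
      linear_combination (-4 * (r - t * √2 : ℝ) ^ 2) * hs0 - 4 * s * (t:ℝ) ^ 2 * sqrt2_sq)
  obtain ⟨x, y, hx, hy⟩ := int_pair (P := p ^ 2 + 2 * q ^ 2 - s * (r ^ 2 + 2 * t ^ 2))
    (Q := 2 * p * q - s * (2 * r * t))
    (by
      refine integral_of_eq (pp.mul pm) ?_; simp only [ev]; push_cast
      linear_combination ((r + t * √2 : ℝ) ^ 2) * hs0 + (s * (t:ℝ) ^ 2 - q ^ 2) * sqrt2_sq)
    (by
      refine integral_of_eq (mp.mul mm) ?_; simp only [ev]; push_cast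
      linear_combination ((r - t * √2 : ℝ) ^ 2) * hs0 + (s * (t:ℝ) ^ 2 - q ^ 2) * sqrt2_sq)
  -- The number `s N(2r + 2t√2)` is rational and its square is an integer.
  obtain ⟨z, hz⟩ := int_of_sq_mul squarefree_one (x := s * ((2 * r) ^ 2 - 2 * (2 * t) ^ 2))
    (m := m ^ 2 - 2 * n ^ 2) (by push_cast; rw [← hm, ← hn]; ring)
  obtain ⟨c', hc⟩ := int_of_sq_mul hs (x := 4 * r) (m := 2 * (m + z)) (by
    push_cast; rw [← hm, ← hz]; ring)
  obtain ⟨d', hd⟩ := int_of_sq_mul hs (x := 4 * t) (m := m - z) (by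
    push_cast; rw [← hm, ← hz]; ring)
  have e : (s:ℤ) * (c' ^ 2 + 2 * d' ^ 2) = 4 * m := by
    have : (s:ℚ) * (c' ^ 2 + 2 * d' ^ 2) = 4 * m := by rw [← hc, ← hd, ← hm]; ring
    exact_mod_cast this
  have e4 : (4:ℤ) ∣ c' ^ 2 + 2 * d' ^ 2 := by
    have cop : IsCoprime (4:ℤ) s := by
      rw [show (4:ℤ) = 2 ^ 2 by norm_num]
      apply IsCoprime.pow_left
      rw [Int.isCoprime_iff_gcd_eq_one]
      have : Nat.Coprime 2 s := by simpa using Nat.odd_iff.mpr hodd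
      exact this
    exact cop.dvd_of_dvd_mul_left (Dvd.intro _ e.symm)
  have c2 : 2 ∣ c' := by
    have : 2 ∣ c' ^ 2 := by omega
    exact Int.prime_two.dvd_of_dvd_pow this
  obtain ⟨c, rfl⟩ := c2
  have d2 : 2 ∣ d' := by
    have : 2 ∣ d' ^ 2 := by ring_nf at e4; omega
    exact Int.prime_two.dvd_of_dvd_pow this
  obtain ⟨d, rfl⟩ := d2
  push_cast at hc hd
  have hc' : 2 * r = c := by linarith
  have hd' : 2 * t = d := by linarith
  refine ⟨a, b, c, d, ha, hb, hc', hd', ⟨x, ?_⟩, ⟨y, ?_⟩⟩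
  · have : (a ^ 2 + 2 * b ^ 2 - s * (c ^ 2 + 2 * d ^ 2) : ℚ) = 4 * x := by
      rw [← ha, ← hb, ← hc', ← hd', ← hx]; ring
    exact_mod_cast this
  · have : (a * b - s * (c * d) : ℚ) = 2 * y := by
      rw [← ha, ← hb, ← hc', ← hd', ← hy]; ring
    exact_mod_cast this

lemma exists_coords {s : ℕ} {x : ℝ} (hx : x ∈ biqField 2 s) :
    ∃ p q r t : ℚ, x = ev (√2) (√s) p q r t := by
  have hs0 : (√(s:ℝ)) ^ 2 = s := Real.sq_sqrt (by positivity)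
  have alg : ∀ n : ℕ, IsAlgebraic ℚ (√(n:ℝ)) := fun n =>
    (IsIntegral.of_pow (n := 2) (by norm_num) (by
      rw [Real.sq_sqrt (by positivity)]
      exact isIntegral_algebraMap (R := ℚ) (x := (n:ℚ)))).isAlgebraic
  replace hx : x ∈ Algebra.adjoin ℚ ({√((2:ℕ):ℝ), √(s:ℝ)} : Set ℝ) := by
    rw [← IntermediateField.adjoin_toSubalgebra_of_isAlgebraic]
    · exact hx
    · rintro y (rfl | rfl) <;> exact alg _
  induction hx using Algebra.adjoin_induction with
  | mem y hy =>
    rcases hy with rfl | rfl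
    · exact ⟨0, 1, 0, 0, by simp [ev]⟩
    · exact ⟨0, 0, 1, 0, by simp [ev]⟩
  | algebraMap z => exact ⟨z, 0, 0, 0, by simp [ev]⟩
  | add y z _ _ hy hz =>
    obtain ⟨p₁, q₁, r₁, t₁, rfl⟩ := hy
    obtain ⟨p₂, q₂, r₂, t₂, rfl⟩ := hz
    exact ⟨_, _, _, _, ev_add _ _ _ _ _ _ _ _ _ _⟩
  | mul y z _ _ hy hz =>
    obtain ⟨p₁, q₁, r₁, t₁, rfl⟩ := hy
    obtain ⟨p₂, q₂, r₂, t₂, rfl⟩ := hz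
    exact ⟨_, _, _, _, ev_mul sqrt2_sq hs0 _ _ _ _ _ _ _ _⟩

lemma dvd_of_sq_sub {x y k : ℤ} (h : x ^ 2 - y ^ 2 = 2 * k) : (2:ℤ) ∣ x - y := by
  have : (2:ℤ) ∣ (x - y) ^ 2 := ⟨k + y ^ 2 - x * y, by linear_combination h⟩
  exact Int.prime_two.dvd_of_dvd_pow this

/-- For `s ≡ 1 (mod 4)` every integer of `K` is `(A + B√s)/2` with `A ≡ B (mod 2)` in `ℤ[√2]`. -/
lemma coords_one {s : ℕ} (hs : Squarefree s) (h1 : 1 < s) (h4 : s % 4 = 1) {x : ℝ}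
    (hx : x ∈ ringOfInt (biqField 2 s)) :
    ∃ a b c d : ℤ, 4 * x ^ 2 = ev (√2) (√s) a b c d ^ 2 ∧ (2:ℤ) ∣ a - c ∧ (2:ℤ) ∣ b - d := by
  obtain ⟨p, q, r, t, rfl⟩ := exists_coords hx.1
  obtain ⟨a, b, c, d, ha, hb, hc, hd, ⟨m, hm⟩, -⟩ := half_coords hs h1 (by omega) hx.2
  refine ⟨a, b, c, d, ?_, ?_⟩
  · rw [← ha, ← hb, ← hc, ← hd]
    simp only [ev]; push_cast; ring
  · obtain ⟨k, hk⟩ : ∃ k : ℤ, (s:ℤ) = 4 * k + 1 := ⟨s / 4, by omega⟩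
    rw [hk] at hm
    have hac : (2:ℤ) ∣ a - c := dvd_of_sq_sub
      (k := 2 * m - b ^ 2 + d ^ 2 + 2 * k * (c ^ 2 + 2 * d ^ 2))
      (by linear_combination hm)
    refine ⟨hac, ?_⟩
    obtain ⟨j, hj⟩ := hac
    obtain rfl : a = c + 2 * j := by linarith
    exact dvd_of_sq_sub (k := m + k * (c ^ 2 + 2 * d ^ 2) - c * j - j ^ 2) (by linarith)

/-- For `s ≡ 3 (mod 4)` every integer of `K` is `(A + B√s)/√2` with `A ≡ B (mod √2)` in `ℤ[√2]`. -/
lemma coords_three {s : ℕ} (hs : Squarefree s) (h1 : 1 < s) (h4 : s % 4 = 3) {x : ℝ}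
    (hx : x ∈ ringOfInt (biqField 2 s)) :
    ∃ a b c d : ℤ, 2 * x ^ 2 = ev (√2) (√s) a b c d ^ 2 ∧ (2:ℤ) ∣ a - c := by
  obtain ⟨p, q, r, t, rfl⟩ := exists_coords hx.1
  obtain ⟨a, b, c, d, ha, hb, hc, hd, ⟨m, hm⟩, ⟨n, hn⟩⟩ := half_coords hs h1 (by omega) hx.2
  obtain ⟨k, hk⟩ : ∃ k : ℤ, (s:ℤ) = 4 * k + 3 := ⟨s / 4, by omega⟩
  rw [hk] at hm hn
  have hac : (2:ℤ) ∣ a - c := dvd_of_sq_sub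
    (k := 2 * m - b ^ 2 + 3 * d ^ 2 + 2 * k * (c ^ 2 + 2 * d ^ 2) + c ^ 2)
    (by linear_combination hm)
  have ha2 : (2:ℤ) ∣ a := by
    by_contra hodd
    obtain ⟨i, rfl⟩ : ∃ i, a = 2 * i + 1 := ⟨a / 2, by omega⟩
    obtain ⟨j, rfl⟩ : ∃ j, c = 2 * j + 1 := ⟨c / 2, by omega⟩
    have hbd : (2:ℤ) ∣ b - d :=
      ⟨n - i * b + (4 * k + 3) * (j * d) + (2 * k + 1) * d, by linear_combination hn⟩
    obtain ⟨l, hl⟩ := hbd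
    obtain rfl : b = d + 2 * l := by linarith
    ring_nf at hm
    omega
  obtain ⟨i, rfl⟩ := ha2
  obtain ⟨j, rfl⟩ : (2:ℤ) ∣ c := by omega
  have hbd : (2:ℤ) ∣ b - d := dvd_of_sq_sub
    (k := m - i ^ 2 + k * (2 * d ^ 2 + 4 * j ^ 2) + 3 * j ^ 2 + d ^ 2) (by linarith)
  refine ⟨b, i, d, j, ?_, hbd⟩
  obtain rfl : p = i := by push_cast at ha; linarith
  obtain rfl : r = j := by push_cast at hc; linarith
  have key : √2 * ev (√2) (√s) i q j t = ev (√2) (√s) b i d j := by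
    rw [← hb, ← hd]
    simp only [ev]; push_cast
    linear_combination ((q:ℝ) + t * √s) * sqrt2_sq
  rw [← key, mul_pow, sqrt2_sq]

/-! ### Elements that are not sums of four squares -/

lemma ev_inj {s : ℕ} (hs : Squarefree s) (h1 : 1 < s) (hodd : s % 2 = 1)
    {p q r t p' q' r' t' : ℚ} (h : ev (√2) (√s) p q r t = ev (√2) (√s) p' q' r' t') :
    p = p' ∧ q = q' ∧ r = r' ∧ t = t' := by
  obtain ⟨e1, e2, e3, e4⟩ := lin_indep4 hs h1 hodd
    (p := p - p') (q := q - q') (r := r - r') (t := t - t') (by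
      simp only [ev] at h ⊢; push_cast; linear_combination h)
  exact ⟨by linarith, by linarith, by linarith, by linarith⟩

lemma system_of_sum {s : ℕ} (hs : Squarefree s) (h1 : 1 < s) (hodd : s % 2 = 1)
    {a b c d : Fin 4 → ℤ} {U₀ W₀ C₁ C₂ : ℤ}
    (h : ∑ i, ev (√2) (√s) (a i) (b i) (c i) (d i) ^ 2 =
      ev (√2) (√s) (U₀ + 4 * s) (2 * (W₀ - s)) (2 * C₁) (2 * C₂))
    (hac : ∀ i, (2:ℤ) ∣ a i - c i) : IsRep s U₀ W₀ C₁ C₂ a b c d := by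
  have hs0 : (√(s:ℝ)) ^ 2 = s := Real.sq_sqrt (by positivity)
  simp only [sq, ev_mul sqrt2_sq hs0, Fin.sum_univ_four, ev_add] at h
  obtain ⟨e1, e2, e3, e4⟩ := ev_inj hs h1 hodd h
  simp only [IsRep, Fin.sum_univ_four]
  refine ⟨?_, ?_, ?_, ?_, hac⟩ <;> qify <;> linarith

lemma not_four_generic {s : ℕ} (hs : Squarefree s) (h17 : 17 ≤ s) (h4 : s % 4 = 1) {α : ℝ}
    (hα : 4 * α = ev (√2) (√s) (52 + 4 * s) (2 * (-11 - s)) (2 * 4) (2 * 0)) :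
    ¬ SumOfNSquaresIn (ringOfInt (biqField 2 s)) 4 α := by
  rintro ⟨x, hx, rfl⟩
  choose a b c d hsq hac hbd using fun i => coords_one hs (by omega) h4 (hx i)
  rw [Finset.mul_sum] at hα
  simp only [hsq] at hα
  exact no_rep (system_of_sum (U₀ := 52) (W₀ := -11) (C₁ := 4) (C₂ := 0) hs (by omega) (by omega)
    (by rw [hα]; push_cast; rfl) hac) (Or.inl ⟨by omega, hbd⟩)

lemma not_four_thirteen {α : ℝ}
    (hα : 4 * α = ev (√2) (√(13:ℕ)) (60 + 4 * (13:ℕ)) (2 * (-11 - (13:ℕ))) (2 * 8) (2 * -8)) :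
    ¬ SumOfNSquaresIn (ringOfInt (biqField 2 13)) 4 α := by
  have hs : Squarefree 13 := (by norm_num : Nat.Prime 13).squarefree
  rintro ⟨x, hx, rfl⟩
  choose a b c d hsq hac hbd using fun i => coords_one hs (by omega) (by omega) (hx i)
  rw [Finset.mul_sum] at hα
  simp only [hsq] at hα
  exact no_rep (system_of_sum (U₀ := 60) (W₀ := -11) (C₁ := 8) (C₂ := -8) hs (by omega) (by omega)
    (by rw [hα]; push_cast; rfl) hac) (Or.inr (Or.inl ⟨by omega, hbd⟩))

lemma not_four_three {s : ℕ} (hs : Squarefree s) (h11 : 11 ≤ s) (h4 : s % 4 = 3) {α : ℝ}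
    (hα : 2 * α = ev (√2) (√s) (16 + 4 * s) (2 * (-3 - s)) (2 * 2) (2 * -2)) :
    ¬ SumOfNSquaresIn (ringOfInt (biqField 2 s)) 4 α := by
  rintro ⟨x, hx, rfl⟩
  choose a b c d hsq hac using fun i => coords_three hs (by omega) h4 (hx i)
  rw [Finset.mul_sum] at hα
  simp only [hsq] at hα
  exact no_rep (system_of_sum (U₀ := 16) (W₀ := -3) (C₁ := 2) (C₂ := -2) hs (by omega) (by omega)
    (by rw [hα]; push_cast; rfl) hac) (Or.inr (Or.inr (by omega)))

/-! ### Representations by five squares -/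

lemma roi_intCast (K : IntermediateField ℚ ℝ) (n : ℤ) : (n:ℝ) ∈ ringOfInt K :=
  ⟨intCast_mem K n, isIntegral_algebraMap (R := ℤ) (x := n)⟩

lemma roi_add {K : IntermediateField ℚ ℝ} {x y : ℝ} (hx : x ∈ ringOfInt K)
    (hy : y ∈ ringOfInt K) : x + y ∈ ringOfInt K := ⟨add_mem hx.1 hy.1, hx.2.add hy.2⟩

lemma roi_mul {K : IntermediateField ℚ ℝ} {x y : ℝ} (hx : x ∈ ringOfInt K)
    (hy : y ∈ ringOfInt K) : x * y ∈ ringOfInt K := ⟨mul_mem hx.1 hy.1, hx.2.mul hy.2⟩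

lemma sqrt_left_mem (p q : ℕ) : √(p:ℝ) ∈ biqField p q :=
  IntermediateField.subset_adjoin _ _ (by simp)

lemma sqrt_right_mem (p q : ℕ) : √(q:ℝ) ∈ biqField p q :=
  IntermediateField.subset_adjoin _ _ (by simp)

lemma integral_sqrt (n : ℕ) : IsIntegral ℤ (√(n:ℝ)) :=
  IsIntegral.of_pow (n := 2) (by norm_num) (by
    rw [Real.sq_sqrt (by positivity)]
    exact isIntegral_algebraMap (R := ℤ) (x := (n:ℤ)))

lemma roi_sqrt2 (s : ℕ) : √2 ∈ ringOfInt (biqField 2 s) := by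
  have : √((2:ℕ):ℝ) ∈ ringOfInt (biqField 2 s) := ⟨sqrt_left_mem 2 s, integral_sqrt 2⟩
  simpa using this

lemma roi_sqrt (s : ℕ) : √(s:ℝ) ∈ ringOfInt (biqField 2 s) :=
  ⟨sqrt_right_mem 2 s, integral_sqrt s⟩

lemma roi_half (s : ℕ) (h4 : s % 4 = 1) : (1 + √(s:ℝ)) / 2 ∈ ringOfInt (biqField 2 s) := by
  refine ⟨div_mem (add_mem (one_mem _) (sqrt_right_mem 2 s)) (ofNat_mem _ 2), ?_⟩
  obtain ⟨k, hk⟩ : ∃ k, s = 4 * k + 1 := ⟨s / 4, by omega⟩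
  have hs0 : (√(s:ℝ)) ^ 2 = s := Real.sq_sqrt (by positivity)
  have hs1 : (s:ℝ) = 4 * k + 1 := by exact_mod_cast hk
  refine ⟨Polynomial.X ^ 2 - Polynomial.X - Polynomial.C (k:ℤ), by monicity!, ?_⟩
  simp
  linear_combination hs0 / 4 + hs1 / 4

lemma roi_half_sqrt2 (s : ℕ) (h4 : s % 4 = 3) :
    √2 * (1 + √(s:ℝ)) / 2 ∈ ringOfInt (biqField 2 s) := by
  refine ⟨div_mem (mul_mem (roi_sqrt2 s).1 (add_mem (one_mem _) (sqrt_right_mem 2 s)))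
    (ofNat_mem _ 2), IsIntegral.of_pow (n := 2) (by norm_num) ?_⟩
  obtain ⟨k, hk⟩ : ∃ k, s = 4 * k + 3 := ⟨s / 4, by omega⟩
  have hs0 : (√(s:ℝ)) ^ 2 = s := Real.sq_sqrt (by positivity)
  have hs1 : (s:ℝ) = 4 * k + 3 := by exact_mod_cast hk
  refine integral_of_eq (y := ((2 * k + 2 : ℤ) : ℝ) + √s)
    (roi_add (roi_intCast _ _) (roi_sqrt s)).2 ?_
  push_cast
  linear_combination ((1 + √s) ^ 2 / 4 : ℝ) * sqrt2_sq + hs0 / 2 + hs1 / 2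

lemma five_squares {S : Set ℝ} {x₁ x₂ x₃ x₄ x₅ : ℝ} (h₁ : x₁ ∈ S) (h₂ : x₂ ∈ S) (h₃ : x₃ ∈ S)
    (h₄ : x₄ ∈ S) (h₅ : x₅ ∈ S) :
    SumOfNSquaresIn S 5 (x₁ ^ 2 + x₂ ^ 2 + x₃ ^ 2 + x₄ ^ 2 + x₅ ^ 2) := by
  refine ⟨![x₁, x₂, x₃, x₄, x₅], fun i => ?_, by simp [Fin.sum_univ_five]⟩
  fin_cases i <;> simpa

lemma mem_of_sum {K : IntermediateField ℚ ℝ} {n : ℕ} {α : ℝ}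
    (h : SumOfNSquaresIn (ringOfInt K) n α) : α ∈ ringOfInt K := by
  obtain ⟨x, hx, rfl⟩ := h
  exact ⟨sum_mem fun i _ => pow_mem (hx i).1 2, IsIntegral.sum _ fun i _ => (hx i).2.pow 2⟩

lemma length_five_one {s : ℕ} (hs : Squarefree s) (h17 : 17 ≤ s) (h4 : s % 4 = 1) :
    SumOfNSquaresIn (ringOfInt (biqField 2 s)) 5
        (1 ^ 2 + (1 - Real.sqrt 2) ^ 2 + (2 - Real.sqrt 2) ^ 2 +
          (1 / 2 + Real.sqrt 2 + Real.sqrt s / 2) ^ 2 +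
          ((-1 + Real.sqrt 2 - Real.sqrt s + Real.sqrt (2 * s)) / 2) ^ 2) ∧
      ¬ SumOfNSquaresIn (ringOfInt (biqField 2 s)) 4
        (1 ^ 2 + (1 - Real.sqrt 2) ^ 2 + (2 - Real.sqrt 2) ^ 2 +
          (1 / 2 + Real.sqrt 2 + Real.sqrt s / 2) ^ 2 +
          ((-1 + Real.sqrt 2 - Real.sqrt s + Real.sqrt (2 * s)) / 2) ^ 2) := by
  have hs0 : (√(s:ℝ)) ^ 2 = s := Real.sq_sqrt (by positivity)
  rw [Real.sqrt_mul (by norm_num) (s:ℝ)]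
  have z := roi_intCast (biqField 2 s)
  have r2 := roi_sqrt2 s
  have rs := roi_half s h4
  constructor
  · apply five_squares
    · convert z 1 using 1; simp
    · convert roi_add (z 1) (roi_mul (z (-1)) r2) using 1; push_cast; ring
    · convert roi_add (z 2) (roi_mul (z (-1)) r2) using 1; push_cast; ring
    · convert roi_add r2 rs using 1; ring
    · convert roi_mul (roi_add (z (-1)) r2) rs using 1; push_cast; ring
  · apply not_four_generic hs h17 h4
    simp only [ev]; push_cast
    linear_combination (12 + (1 + √s) ^ 2 : ℝ) * sqrt2_sq + (4 - 2 * √2) * hs0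

lemma length_five_three {s : ℕ} (hs : Squarefree s) (h11 : 11 ≤ s) (h4 : s % 4 = 3) :
    SumOfNSquaresIn (ringOfInt (biqField 2 s)) 5
        (1 ^ 2 + Real.sqrt 2 ^ 2 + (1 - Real.sqrt 2) ^ 2 +
          (1 + (-Real.sqrt 2 - Real.sqrt (2 * s)) / 2) ^ 2 +
          (Real.sqrt 2 / 2 - Real.sqrt s + Real.sqrt (2 * s) / 2) ^ 2) ∧
      ¬ SumOfNSquaresIn (ringOfInt (biqField 2 s)) 4
        (1 ^ 2 + Real.sqrt 2 ^ 2 + (1 - Real.sqrt 2) ^ 2 +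
          (1 + (-Real.sqrt 2 - Real.sqrt (2 * s)) / 2) ^ 2 +
          (Real.sqrt 2 / 2 - Real.sqrt s + Real.sqrt (2 * s) / 2) ^ 2) := by
  have hs0 : (√(s:ℝ)) ^ 2 = s := Real.sq_sqrt (by positivity)
  rw [Real.sqrt_mul (by norm_num) (s:ℝ)]
  have z := roi_intCast (biqField 2 s)
  have r2 := roi_sqrt2 s
  have rs := roi_half_sqrt2 s h4
  constructor
  · apply five_squares
    · convert z 1 using 1; simp
    · exact r2
    · convert roi_add (z 1) (roi_mul (z (-1)) r2) using 1; push_cast; ring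
    · convert roi_add (z 1) (roi_mul (z (-1)) rs) using 1; push_cast; ring
    · convert roi_add rs (roi_mul (z (-1)) (roi_sqrt s)) using 1; push_cast; ring
  · apply not_four_three hs h11 h4
    simp only [ev]; push_cast
    linear_combination (4 + (1 + √s) ^ 2 : ℝ) * sqrt2_sq + (4 - 2 * √2) * hs0

lemma exists_thirteen : ∃ α, SumOfNSquaresIn (ringOfInt (biqField 2 13)) 5 α ∧
    ¬ SumOfNSquaresIn (ringOfInt (biqField 2 13)) 4 α := by
  have hs0 : (√((13:ℕ):ℝ)) ^ 2 = (13:ℕ) := Real.sq_sqrt (by positivity)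
  have z := roi_intCast (biqField 2 13)
  have r2 := roi_sqrt2 13
  have rs := roi_half 13 (by norm_num)
  refine ⟨1 ^ 2 + √2 ^ 2 + (1 - √2) ^ 2 + (√2 + (1 - √(13:ℕ)) / 2) ^ 2 +
    ((1 - √2) * ((3 + √(13:ℕ)) / 2)) ^ 2, ?_, ?_⟩
  · have m := roi_add (z 1) (roi_mul (z (-1)) r2)
    apply five_squares
    · convert z 1 using 1; simp
    · exact r2
    · convert m using 1; push_cast; ring
    · convert roi_add r2 (roi_add (z 1) (roi_mul (z (-1)) rs)) using 1; push_cast; ring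
    · convert roi_mul m (roi_add (z 1) rs) using 1; push_cast; ring
  · apply not_four_thirteen
    simp only [ev]; push_cast at hs0 ⊢
    linear_combination (12 + (3 + √13) ^ 2 : ℝ) * sqrt2_sq + (4 - 2 * √2) * hs0

lemma exists_of_odd {s : ℕ} (hs : Squarefree s) (h1 : 1 < s) (hodd : s % 2 = 1)
    (h3 : s ≠ 3) (h5 : s ≠ 5) (h7 : s ≠ 7) :
    ∃ α ∈ ringOfInt (biqField 2 s), IsSumOfSquaresIn (ringOfInt (biqField 2 s)) α ∧
      ¬ SumOfNSquaresIn (ringOfInt (biqField 2 s)) 4 α := by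
  suffices ∃ α, SumOfNSquaresIn (ringOfInt (biqField 2 s)) 5 α ∧
      ¬ SumOfNSquaresIn (ringOfInt (biqField 2 s)) 4 α by
    obtain ⟨α, h, h'⟩ := this
    exact ⟨α, mem_of_sum h, ⟨5, h⟩, h'⟩
  have h9 : s ≠ 9 := by rintro rfl; have := hs 3 (by norm_num); simp at this
  rcases (by omega : s % 4 = 1 ∨ s % 4 = 3) with h4 | h4
  · by_cases h13 : s = 13
    · subst h13; exact exists_thirteen
    · exact ⟨_, length_five_one hs (by omega) h4⟩
  · exact ⟨_, length_five_three hs (by omega) h4⟩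

lemma biqField_two_mul (t : ℕ) : biqField 2 (2 * t) = biqField 2 t := by
  have e : √((2 * t : ℕ):ℝ) = √((2:ℕ):ℝ) * √(t:ℝ) := by
    push_cast; rw [Real.sqrt_mul (by norm_num)]
  have e2 : √((2:ℕ):ℝ) * √((2:ℕ):ℝ) = 2 := by rw [Real.mul_self_sqrt (by positivity)]; norm_num
  apply le_antisymm
  · refine IntermediateField.adjoin_le_iff.mpr ?_
    rintro y (rfl | rfl)
    · exact sqrt_left_mem 2 t
    · rw [e]; exact mul_mem (sqrt_left_mem 2 t) (sqrt_right_mem 2 t)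
  · refine IntermediateField.adjoin_le_iff.mpr ?_
    rintro y (rfl | rfl)
    · exact sqrt_left_mem 2 (2 * t)
    · have : √(t:ℝ) = √((2:ℕ):ℝ) * √((2 * t : ℕ):ℝ) / 2 := by
        rw [e]; linear_combination (-√(t:ℝ) / 2) * e2
      rw [this]
      exact div_mem (mul_mem (sqrt_left_mem 2 _) (sqrt_right_mem 2 _)) (ofNat_mem _ 2)

/-- Let `s > 2` be squarefree with `s ∉ {3, 5, 7}` such that
`K = ℚ(√2, √s)` is none of `ℚ(√2,√3)`, `ℚ(√2,√5)`, `ℚ(√2,√7)`. Then `P(O_K) ≥ 5`;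
for `s ≡ 1 (mod 4)`, `s ≠ 13`, resp. `s ≡ 3 (mod 4)`, the indicated elements have
length exactly `5`. -/
theorem pythagoras_sqrt2_ge_five
    (s : ℕ) (hs : Squarefree s) (hs2 : 2 < s)
    (h3 : s ≠ 3) (h5 : s ≠ 5) (h7 : s ≠ 7)
    (hK3 : biqField 2 s ≠ biqField 2 3) (hK5 : biqField 2 s ≠ biqField 2 5)
    (hK7 : biqField 2 s ≠ biqField 2 7) :
    (∃ α ∈ ringOfInt (biqField 2 s), IsSumOfSquaresIn (ringOfInt (biqField 2 s)) α ∧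
      ¬ SumOfNSquaresIn (ringOfInt (biqField 2 s)) 4 α) ∧
    (s % 4 = 1 → s ≠ 13 →
      SumOfNSquaresIn (ringOfInt (biqField 2 s)) 5
        (1 ^ 2 + (1 - Real.sqrt 2) ^ 2 + (2 - Real.sqrt 2) ^ 2 +
          (1 / 2 + Real.sqrt 2 + Real.sqrt s / 2) ^ 2 +
          ((-1 + Real.sqrt 2 - Real.sqrt s + Real.sqrt (2 * s)) / 2) ^ 2) ∧
      ¬ SumOfNSquaresIn (ringOfInt (biqField 2 s)) 4
        (1 ^ 2 + (1 - Real.sqrt 2) ^ 2 + (2 - Real.sqrt 2) ^ 2 +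
          (1 / 2 + Real.sqrt 2 + Real.sqrt s / 2) ^ 2 +
          ((-1 + Real.sqrt 2 - Real.sqrt s + Real.sqrt (2 * s)) / 2) ^ 2)) ∧
    (s % 4 = 3 →
      SumOfNSquaresIn (ringOfInt (biqField 2 s)) 5
        (1 ^ 2 + Real.sqrt 2 ^ 2 + (1 - Real.sqrt 2) ^ 2 +
          (1 + (-Real.sqrt 2 - Real.sqrt (2 * s)) / 2) ^ 2 +
          (Real.sqrt 2 / 2 - Real.sqrt s + Real.sqrt (2 * s) / 2) ^ 2) ∧
      ¬ SumOfNSquaresIn (ringOfInt (biqField 2 s)) 4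
        (1 ^ 2 + Real.sqrt 2 ^ 2 + (1 - Real.sqrt 2) ^ 2 +
          (1 + (-Real.sqrt 2 - Real.sqrt (2 * s)) / 2) ^ 2 +
          (Real.sqrt 2 / 2 - Real.sqrt s + Real.sqrt (2 * s) / 2) ^ 2)) := by
  have h9 : s ≠ 9 := by rintro rfl; have := hs 3 (by norm_num); simp at this
  refine ⟨?_, fun h4 h13 => length_five_one hs (by omega) h4, fun h4 => length_five_three hs (by omega) h4⟩
  rcases Nat.mod_two_eq_zero_or_one s with heven | hodd
  · obtain ⟨t, rfl⟩ : ∃ t, s = 2 * t := ⟨s / 2, by omega⟩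
    have ht : Squarefree t := hs.of_mul_right
    have htodd : t % 2 = 1 := by
      by_contra hcon
      have := hs 2 (Nat.mul_dvd_mul_left 2 (by omega))
      simp at this
    rw [biqField_two_mul] at hK3 hK5 hK7 ⊢
    exact exists_of_odd ht (by omega) htodd (by rintro rfl; exact hK3 rfl)
      (by rintro rfl; exact hK5 rfl) (by rintro rfl; exact hK7 rfl)
  · exact exists_of_odd hs (by omega) hodd h3 h5 h7
end

section
/- Let s > 3 be a square-free integer not divisible by 3 with s ∉ {5, 7}, and let K = ℚ(√3, √s). Then the Pythagoras number of O_K is at least 5. In particular, the element α = 1² + 1² + (2+√3)² + w² + (1+w)² has length exactly 5, where w = (1+√s)/2 if s ≡ 1 (mod 4), w = (√s+√(3s))/2 if s ≡ 2 (mod 4), and w = (√3+√s)/2 if s ≡ 3 (mod 4). -/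
/-! ### Inequalities and congruences for `x² + 3y²` -/

/-- A rational form of `2√3·xy ≤ x² + 3y²`, using `17/5 < 2√3`. -/
theorem amgm (x y z t : ℤ) :
    17 * (x * y + z * t) ≤ 5 * (x ^ 2 + 3 * y ^ 2 + z ^ 2 + 3 * t ^ 2) := by
  nlinarith [sq_nonneg (10 * x - 17 * y), sq_nonneg (10 * z - 17 * t), sq_nonneg y, sq_nonneg t]

/-- `9 + 4√3` is not a sum of two squares in `ℤ[√3]`: modulo 3 both `x` and `z` would vanish.
This is the residue of `1² + 1² + (2+√3)²` left to two squares. -/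
theorem form_nine {x y z t : ℤ} (h : x ^ 2 + 3 * y ^ 2 + z ^ 2 + 3 * t ^ 2 = 9) :
    x * y + z * t ≠ 2 := by
  intro h2
  have hx : x % 3 = 0 ∧ z % 3 = 0 := by
    have hx : x % 3 = 0 ∨ x % 3 = 1 ∨ x % 3 = 2 := by omega
    have hz : z % 3 = 0 ∨ z % 3 = 1 ∨ z % 3 = 2 := by omega
    have h3 : (x ^ 2 + z ^ 2) % 3 = 0 := by omega
    rcases hx with hx | hx | hx <;> rcases hz with hz | hz | hz <;>
      simp [pow_two, Int.add_emod, Int.mul_emod, hx, hz] at h3 ⊢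
  obtain ⟨u, rfl⟩ := Int.dvd_of_emod_eq_zero hx.1
  obtain ⟨v, rfl⟩ := Int.dvd_of_emod_eq_zero hx.2
  have : 3 * (u * y + v * t) = 2 := by linarith
  omega

/-! ### Signs, order and small shapes -/

/-- The choice of one pair among `(c, d)` and `(-c, -d)`: the first nonzero entry,
if there is one, is positive. -/
def SignNormal (c d : ℤ) : Prop := 0 < c ∨ (c = 0 ∧ 0 ≤ d)

theorem entry_cases {c d : ℤ} (hs : SignNormal c d) (h : c ^ 2 + 3 * d ^ 2 ≤ 6) :
    (c = 0 ∧ d = 0) ∨ (c = 1 ∧ d = 0) ∨ (c = 0 ∧ d = 1) ∨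
    (c = 2 ∧ d = 0) ∨ (c = 1 ∧ d = 1) ∨ (c = 1 ∧ d = -1) := by
  have h1 : c ≤ 2 := by nlinarith [sq_nonneg d]
  have h2 : d ≤ 1 := by nlinarith [sq_nonneg c]
  have h3 : -1 ≤ d := by nlinarith [sq_nonneg c]
  have h0 : 0 ≤ c := by rcases hs with h | h <;> omega
  unfold SignNormal at hs
  interval_cases c <;> interval_cases d <;> simp_all

/-- The possible `(cᵢ, dᵢ)`, normalised in sign and ordered by decreasing `cᵢ² + 3dᵢ²`, when
`∑ (cᵢ² + 3dᵢ²) = 2`. -/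
theorem shape_two {c₀ c₁ c₂ c₃ d₀ d₁ d₂ d₃ : ℤ}
    (s₀ : SignNormal c₀ d₀) (s₁ : SignNormal c₁ d₁) (s₂ : SignNormal c₂ d₂)
    (s₃ : SignNormal c₃ d₃)
    (o₁ : c₁ ^ 2 + 3 * d₁ ^ 2 ≤ c₀ ^ 2 + 3 * d₀ ^ 2)
    (o₂ : c₂ ^ 2 + 3 * d₂ ^ 2 ≤ c₁ ^ 2 + 3 * d₁ ^ 2)
    (o₃ : c₃ ^ 2 + 3 * d₃ ^ 2 ≤ c₂ ^ 2 + 3 * d₂ ^ 2)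
    (hS : (c₀ ^ 2 + 3 * d₀ ^ 2) + (c₁ ^ 2 + 3 * d₁ ^ 2) + (c₂ ^ 2 + 3 * d₂ ^ 2) +
      (c₃ ^ 2 + 3 * d₃ ^ 2) = 2) :
    (c₀ = 1 ∧ d₀ = 0) ∧ (c₁ = 1 ∧ d₁ = 0) ∧ (c₂ = 0 ∧ d₂ = 0) ∧ (c₃ = 0 ∧ d₃ = 0) := by
  have p₃ : 0 ≤ c₃ ^ 2 + 3 * d₃ ^ 2 := by positivity
  have e₀ := entry_cases s₀ (by omega)
  have e₁ := entry_cases s₁ (by omega)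
  have e₂ := entry_cases s₂ (by omega)
  have e₃ := entry_cases s₃ (by omega)
  rcases e₀ with ⟨rfl, rfl⟩ | ⟨rfl, rfl⟩ | ⟨rfl, rfl⟩ | ⟨rfl, rfl⟩ | ⟨rfl, rfl⟩ | ⟨rfl, rfl⟩ <;>
    try omega
  rcases e₁ with ⟨rfl, rfl⟩ | ⟨rfl, rfl⟩ | ⟨rfl, rfl⟩ | ⟨rfl, rfl⟩ | ⟨rfl, rfl⟩ | ⟨rfl, rfl⟩ <;>
    try omega
  rcases e₂ with ⟨rfl, rfl⟩ | ⟨rfl, rfl⟩ | ⟨rfl, rfl⟩ | ⟨rfl, rfl⟩ | ⟨rfl, rfl⟩ | ⟨rfl, rfl⟩ <;>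
    try omega
  rcases e₃ with ⟨rfl, rfl⟩ | ⟨rfl, rfl⟩ | ⟨rfl, rfl⟩ | ⟨rfl, rfl⟩ | ⟨rfl, rfl⟩ | ⟨rfl, rfl⟩ <;>
    omega

/-- The analogue of `shape_two` for `∑ (cᵢ² + 3dᵢ²) = 4`. -/
theorem shape_four {c₀ c₁ c₂ c₃ d₀ d₁ d₂ d₃ : ℤ}
    (s₀ : SignNormal c₀ d₀) (s₁ : SignNormal c₁ d₁) (s₂ : SignNormal c₂ d₂)
    (s₃ : SignNormal c₃ d₃)
    (o₁ : c₁ ^ 2 + 3 * d₁ ^ 2 ≤ c₀ ^ 2 + 3 * d₀ ^ 2)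
    (o₂ : c₂ ^ 2 + 3 * d₂ ^ 2 ≤ c₁ ^ 2 + 3 * d₁ ^ 2)
    (o₃ : c₃ ^ 2 + 3 * d₃ ^ 2 ≤ c₂ ^ 2 + 3 * d₂ ^ 2)
    (hS : (c₀ ^ 2 + 3 * d₀ ^ 2) + (c₁ ^ 2 + 3 * d₁ ^ 2) + (c₂ ^ 2 + 3 * d₂ ^ 2) +
      (c₃ ^ 2 + 3 * d₃ ^ 2) = 4) :
    ((c₀ = 1 ∧ d₀ = 0) ∧ (c₁ = 1 ∧ d₁ = 0) ∧ (c₂ = 1 ∧ d₂ = 0) ∧ (c₃ = 1 ∧ d₃ = 0)) ∨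
    (((c₀ = 0 ∧ d₀ = 1) ∧ (c₁ = 1 ∧ d₁ = 0) ∨
      ((c₀ = 2 ∧ d₀ = 0) ∨ (c₀ = 1 ∧ d₀ = 1) ∨ (c₀ = 1 ∧ d₀ = -1)) ∧ (c₁ = 0 ∧ d₁ = 0)) ∧
      (c₂ = 0 ∧ d₂ = 0) ∧ (c₃ = 0 ∧ d₃ = 0)) := by
  have p₃ : 0 ≤ c₃ ^ 2 + 3 * d₃ ^ 2 := by positivity
  have e₀ := entry_cases s₀ (by omega)
  have e₁ := entry_cases s₁ (by omega)
  have e₂ := entry_cases s₂ (by omega)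
  have e₃ := entry_cases s₃ (by omega)
  rcases e₀ with ⟨rfl, rfl⟩ | ⟨rfl, rfl⟩ | ⟨rfl, rfl⟩ | ⟨rfl, rfl⟩ | ⟨rfl, rfl⟩ | ⟨rfl, rfl⟩ <;>
  rcases e₁ with ⟨rfl, rfl⟩ | ⟨rfl, rfl⟩ | ⟨rfl, rfl⟩ | ⟨rfl, rfl⟩ | ⟨rfl, rfl⟩ | ⟨rfl, rfl⟩ <;>
    (try omega) <;>
  rcases e₂ with ⟨rfl, rfl⟩ | ⟨rfl, rfl⟩ | ⟨rfl, rfl⟩ | ⟨rfl, rfl⟩ | ⟨rfl, rfl⟩ | ⟨rfl, rfl⟩ <;>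
    (try omega) <;>
  rcases e₃ with ⟨rfl, rfl⟩ | ⟨rfl, rfl⟩ | ⟨rfl, rfl⟩ | ⟨rfl, rfl⟩ | ⟨rfl, rfl⟩ | ⟨rfl, rfl⟩ <;>
    omega

/-- Quadruples `(aᵢ, bᵢ, cᵢ, dᵢ)` can be replaced by sign-normalised ones, ordered by decreasing
`cᵢ² + 3dᵢ²`, without changing sums of even functions or losing even properties of the entries. -/
theorem exists_normalized (a b c d : Fin 4 → ℤ) : ∃ a' b' c' d' : Fin 4 → ℤ,
    (∀ i, SignNormal (c' i) (d' i)) ∧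
    (∀ i j, i ≤ j → c' j ^ 2 + 3 * d' j ^ 2 ≤ c' i ^ 2 + 3 * d' i ^ 2) ∧
    (∀ g : ℤ → ℤ → ℤ → ℤ → ℤ, (∀ x y z t, g (-x) (-y) (-z) (-t) = g x y z t) →
      ∑ i, g (a' i) (b' i) (c' i) (d' i) = ∑ i, g (a i) (b i) (c i) (d i)) ∧
    (∀ p : ℤ → ℤ → ℤ → ℤ → Prop, (∀ x y z t, p x y z t → p (-x) (-y) (-z) (-t)) →
      (∀ i, p (a i) (b i) (c i) (d i)) → ∀ i, p (a' i) (b' i) (c' i) (d' i)) := by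
  classical
  let σ := Tuple.sort (fun i => -(c i ^ 2 + 3 * d i ^ 2))
  have hσ := Tuple.monotone_sort (fun i => -(c i ^ 2 + 3 * d i ^ 2))
  let e : Fin 4 → ℤ := fun i => if SignNormal (c (σ i)) (d (σ i)) then 1 else -1
  have he : ∀ i, e i = 1 ∨ e i = -1 := by
    intro i; simp only [e]; split_ifs <;> simp
  have hsq : ∀ i, e i ^ 2 = 1 := by
    intro i; rcases he i with h | h <;> rw [h] <;> norm_num
  refine ⟨fun i => e i * a (σ i), fun i => e i * b (σ i), fun i => e i * c (σ i),
    fun i => e i * d (σ i), ?_, ?_, ?_, ?_⟩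
  · intro i
    by_cases h : SignNormal (c (σ i)) (d (σ i))
    · simp only [e, h, if_true, one_mul]
    · simp only [e, h, if_false, neg_one_mul]
      unfold SignNormal at h ⊢
      omega
  · intro i j hij
    have := hσ hij
    simp only [Function.comp] at this
    simp only [mul_pow, hsq, one_mul]
    simp only [σ]
    omega
  · intro g hg
    rw [← Equiv.sum_comp σ (fun i => g (a i) (b i) (c i) (d i))]
    refine Finset.sum_congr rfl fun i _ => ?_
    rcases he i with h | h <;> simp [h, hg]
  · intro p hp H i
    rcases he i with h | h
    · simpa [h] using H (σ i)
    · simpa [h] using hp _ _ _ _ (H (σ i))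

theorem shape_zero {c d : ℤ} (h : c ^ 2 + 3 * d ^ 2 ≤ 0) : c = 0 ∧ d = 0 := by
  have hc : c ^ 2 = 0 := by nlinarith [sq_nonneg c, sq_nonneg d]
  have hd : d ^ 2 = 0 := by nlinarith [sq_nonneg c, sq_nonneg d]
  exact ⟨by simpa using hc, by simpa using hd⟩

theorem four_dvd_form {c d : ℤ} (h : 2 ∣ c - d) : 4 ∣ c ^ 2 + 3 * d ^ 2 := by
  obtain ⟨k, hk⟩ := h
  obtain rfl : c = d + 2 * k := by linarith
  exact ⟨d ^ 2 + d * k + k ^ 2, by ring⟩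

theorem form_ne_eight (c d : ℤ) : c ^ 2 + 3 * d ^ 2 ≠ 8 := by
  intro h
  have i1 : d ≤ 1 := by nlinarith [sq_nonneg c]
  have i2 : -1 ≤ d := by nlinarith [sq_nonneg c]
  have i3 : c ≤ 3 := by nlinarith [sq_nonneg d]
  have i4 : -3 ≤ c := by nlinarith [sq_nonneg d]
  interval_cases d <;> interval_cases c <;> omega

theorem amgm_four (x y z t u v p q : ℤ) :
    17 * (x * y + z * t + u * v + p * q) ≤
      5 * (x ^ 2 + 3 * y ^ 2 + z ^ 2 + 3 * t ^ 2 + u ^ 2 + 3 * v ^ 2 + p ^ 2 + 3 * q ^ 2) := by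
  linarith [amgm x y z t, amgm u v p q]

/-- The equations stating that `9 + 4√3 + w² + (1+w)²` is the sum of the squares of
`w + e + f√3`, `w + (1 - e) - f√3`, `x + y√3` and `z + t√3`. -/
theorem core_two {e f x y z t : ℤ}
    (hQ : 2 * (e * (e - 1)) + 6 * f ^ 2 + (x ^ 2 + 3 * y ^ 2 + z ^ 2 + 3 * t ^ 2) = 9)
    (hP : f * (2 * e - 1) + (x * y + z * t) = 2) : False := by
  have hA := amgm x y z t
  have hQ0 : 0 ≤ x ^ 2 + 3 * y ^ 2 + z ^ 2 + 3 * t ^ 2 := by positivity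
  have hN := form_nine (x := x) (y := y) (z := z) (t := t)
  generalize x ^ 2 + 3 * y ^ 2 + z ^ 2 + 3 * t ^ 2 = Q at *
  generalize x * y + z * t = P at *
  have f1 : f ≤ 1 := by nlinarith [sq_nonneg (2 * e - 1)]
  have f2 : -1 ≤ f := by nlinarith [sq_nonneg (2 * e - 1)]
  have e1 : e ≤ 2 := by nlinarith [sq_nonneg f]
  have e2 : -1 ≤ e := by nlinarith [sq_nonneg f]
  interval_cases e <;> interval_cases f <;> omega

/-! ### The Diophantine systems -/

set_option maxHeartbeats 1000000 in
/-- Case `s ≡ 1 (mod 4)`: with the parity conditions `a ≡ c` and `b ≡ d` modulo 2, the equations expressing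
`4α = ∑ (2xᵢ)²` have no integer solution. -/
theorem no_solution_one {s : ℤ} (hs : 13 ≤ s) (a b c d : Fin 4 → ℤ)
    (hpar : ∀ i, 2 ∣ a i - c i ∧ 2 ∣ b i - d i)
    (h1 : ∑ i, (a i ^ 2 + 3 * b i ^ 2 + s * (c i ^ 2 + 3 * d i ^ 2)) = 46 + 2 * s)
    (h2 : ∑ i, (a i * b i + s * (c i * d i)) = 8)
    (h3 : ∑ i, (a i * c i + 3 * (b i * d i)) = 4)
    (h4 : ∑ i, (a i * d i + b i * c i) = 0) : False := by
  obtain ⟨a', b', c', d', hsgn, hord, hsum, hp⟩ := exists_normalized a b c d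
  rw [← hsum (fun x y z t => x ^ 2 + 3 * y ^ 2 + s * (z ^ 2 + 3 * t ^ 2)) (by intros; ring)] at h1
  rw [← hsum (fun x y z t => x * y + s * (z * t)) (by intros; ring)] at h2
  rw [← hsum (fun x y z t => x * z + 3 * (y * t)) (by intros; ring)] at h3
  rw [← hsum (fun x y z t => x * t + y * z) (by intros; ring)] at h4
  have hpar' := hp (fun x y z t => 2 ∣ x - z ∧ 2 ∣ y - t) (by intros; omega) hpar
  simp only [Fin.sum_univ_four] at h1 h2 h3 h4
  have o₁ := hord 0 1 (by decide)
  have o₂ := hord 1 2 (by decide)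
  have o₃ := hord 2 3 (by decide)
  obtain ⟨⟨e₀, he₀⟩, ⟨f₀, hf₀⟩⟩ := hpar' 0
  obtain ⟨⟨e₁, he₁⟩, ⟨f₁, hf₁⟩⟩ := hpar' 1
  obtain ⟨⟨e₂, he₂⟩, ⟨f₂, hf₂⟩⟩ := hpar' 2
  obtain ⟨⟨e₃, he₃⟩, ⟨f₃, hf₃⟩⟩ := hpar' 3
  have s₀ := hsgn 0
  have s₁ := hsgn 1
  have s₂ := hsgn 2
  have s₃ := hsgn 3
  clear hpar' hsgn hord hsum hp hpar
  rw [sub_eq_iff_eq_add] at he₀ hf₀ he₁ hf₁ he₂ hf₂ he₃ hf₃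
  rw [he₀, hf₀, he₁, hf₁, he₂, hf₂, he₃, hf₃] at h1 h2 h3 h4
  generalize c' 0 = c₀ at *
  generalize c' 1 = c₁ at *
  generalize c' 2 = c₂ at *
  generalize c' 3 = c₃ at *
  generalize d' 0 = d₀ at *
  generalize d' 1 = d₁ at *
  generalize d' 2 = d₂ at *
  generalize d' 3 = d₃ at *
  have p₃ : 0 ≤ c₃ ^ 2 + 3 * d₃ ^ 2 := by positivity
  obtain ⟨S, hS⟩ : ∃ S, (c₀ ^ 2 + 3 * d₀ ^ 2) + (c₁ ^ 2 + 3 * d₁ ^ 2) + (c₂ ^ 2 + 3 * d₂ ^ 2) +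
      (c₃ ^ 2 + 3 * d₃ ^ 2) = S := ⟨_, rfl⟩
  have hS0 : 0 ≤ S := by omega
  have hS5 : S ≤ 5 := by
    have hSs : (S - 2) * s ≤ 46 := by
      rw [← hS]
      linarith [sq_nonneg (2 * e₀ + c₀), sq_nonneg (2 * e₁ + c₁), sq_nonneg (2 * e₂ + c₂),
        sq_nonneg (2 * e₃ + c₃), sq_nonneg (2 * f₀ + d₀), sq_nonneg (2 * f₁ + d₁),
        sq_nonneg (2 * f₂ + d₂), sq_nonneg (2 * f₃ + d₃)]
    by_contra! h
    nlinarith only [hSs, h, hs]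
  -- the equation for `√s`, or for `√3·√s`, shows that `S` is even
  have hev : S + 2 * (e₀ * c₀ + 3 * (f₀ * d₀) + (e₁ * c₁ + 3 * (f₁ * d₁)) +
      (e₂ * c₂ + 3 * (f₂ * d₂)) + (e₃ * c₃ + 3 * (f₃ * d₃))) = 4 := by
    rw [← hS]; linarith
  obtain rfl | rfl | rfl : S = 0 ∨ S = 2 ∨ S = 4 := by omega
  · obtain ⟨rfl, rfl⟩ := shape_zero (c := c₀) (d := d₀) (by omega)
    obtain ⟨rfl, rfl⟩ := shape_zero (c := c₁) (d := d₁) (by omega)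
    obtain ⟨rfl, rfl⟩ := shape_zero (c := c₂) (d := d₂) (by omega)
    obtain ⟨rfl, rfl⟩ := shape_zero (c := c₃) (d := d₃) (by omega)
    simp at h3
  · obtain ⟨⟨rfl, rfl⟩, ⟨rfl, rfl⟩, ⟨rfl, rfl⟩, ⟨rfl, rfl⟩⟩ := shape_two s₀ s₁ s₂ s₃ o₁ o₂ o₃ hS
    obtain rfl : e₁ = 1 - e₀ := by linarith
    obtain rfl : f₁ = - f₀ := by linarith
    -- the shape of the representation by five squares
    exact core_two (e := e₀) (f := f₀) (x := e₂) (y := f₂) (z := e₃) (t := f₃)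
      (by linarith) (by linarith)
  · rcases shape_four s₀ s₁ s₂ s₃ o₁ o₂ o₃ hS with
      ⟨⟨rfl, rfl⟩, ⟨rfl, rfl⟩, ⟨rfl, rfl⟩, ⟨rfl, rfl⟩⟩ |
      ⟨⟨⟨rfl, rfl⟩, ⟨rfl, rfl⟩⟩ | ⟨h, ⟨rfl, rfl⟩⟩, ⟨rfl, rfl⟩, ⟨rfl, rfl⟩⟩
    · linarith [amgm_four e₀ f₀ e₁ f₁ e₂ f₂ e₃ f₃]
    · obtain rfl : e₁ = -3 * f₀ := by linarith
      obtain rfl : f₁ = - e₀ := by linarith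
      have := amgm e₂ f₂ e₃ f₃
      have hf : f₀ = 0 := by
        have hQ : 12 * f₀ ^ 2 ≤ 4 := by
          linarith [sq_nonneg e₀, sq_nonneg e₂, sq_nonneg f₂, sq_nonneg e₃, sq_nonneg f₃]
        have h1 : f₀ < 1 := by nlinarith
        have h2 : -1 < f₀ := by nlinarith
        omega
      subst hf
      linarith [sq_nonneg e₀]
    · rcases h with ⟨rfl, rfl⟩ | ⟨rfl, rfl⟩ | ⟨rfl, rfl⟩
      · obtain rfl : e₀ = 0 := by linarith
        obtain rfl : f₀ = 0 := by linarith
        linarith [amgm_four e₁ f₁ e₂ f₂ e₃ f₃ 0 0]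
      · omega
      · omega

set_option maxHeartbeats 1000000 in
/-- Case `s ≡ 2 (mod 4)`: with the parity conditions `a`, `b` even and `c ≡ d` modulo 2, the equations expressing
`4α = ∑ (2xᵢ)²` have no integer solution. -/
theorem no_solution_two {s : ℤ} (hs : 10 ≤ s) (hs4 : s % 4 = 2) (a b c d : Fin 4 → ℤ)
    (hpar : ∀ i, 2 ∣ a i ∧ 2 ∣ b i ∧ 2 ∣ c i - d i)
    (h1 : ∑ i, (a i ^ 2 + 3 * b i ^ 2 + s * (c i ^ 2 + 3 * d i ^ 2)) = 40 + 8 * s)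
    (h2 : ∑ i, (a i * b i + s * (c i * d i)) = 8 + 2 * s)
    (h3 : ∑ i, (a i * c i + 3 * (b i * d i)) = 2)
    (h4 : ∑ i, (a i * d i + b i * c i) = 2) : False := by
  obtain ⟨a', b', c', d', hsgn, hord, hsum, hp⟩ := exists_normalized a b c d
  rw [← hsum (fun x y z t => x ^ 2 + 3 * y ^ 2 + s * (z ^ 2 + 3 * t ^ 2)) (by intros; ring)] at h1
  rw [← hsum (fun x y z t => x * y + s * (z * t)) (by intros; ring)] at h2
  rw [← hsum (fun x y z t => x * z + 3 * (y * t)) (by intros; ring)] at h3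
  rw [← hsum (fun x y z t => x * t + y * z) (by intros; ring)] at h4
  have hpar' := hp (fun x y z t => 2 ∣ x ∧ 2 ∣ y ∧ 2 ∣ z - t) (by intros; omega) hpar
  simp only [Fin.sum_univ_four] at h1 h2 h3 h4
  have o₁ := hord 0 1 (by decide)
  have o₂ := hord 1 2 (by decide)
  have o₃ := hord 2 3 (by decide)
  obtain ⟨⟨e₀, he₀⟩, ⟨f₀, hf₀⟩, q₀⟩ := hpar' 0
  obtain ⟨⟨e₁, he₁⟩, ⟨f₁, hf₁⟩, q₁⟩ := hpar' 1
  obtain ⟨⟨e₂, he₂⟩, ⟨f₂, hf₂⟩, q₂⟩ := hpar' 2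
  obtain ⟨⟨e₃, he₃⟩, ⟨f₃, hf₃⟩, q₃⟩ := hpar' 3
  have s₀ := hsgn 0
  have s₁ := hsgn 1
  have s₂ := hsgn 2
  have s₃ := hsgn 3
  clear hpar' hsgn hord hsum hp hpar
  rw [he₀, hf₀, he₁, hf₁, he₂, hf₂, he₃, hf₃] at h1 h2 h3 h4
  generalize c' 0 = c₀ at *
  generalize c' 1 = c₁ at *
  generalize c' 2 = c₂ at *
  generalize c' 3 = c₃ at *
  generalize d' 0 = d₀ at *
  generalize d' 1 = d₁ at *
  generalize d' 2 = d₂ at *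
  generalize d' 3 = d₃ at *
  have p₃ : 0 ≤ c₃ ^ 2 + 3 * d₃ ^ 2 := by positivity
  have m₀ := four_dvd_form q₀
  have m₁ := four_dvd_form q₁
  have m₂ := four_dvd_form q₂
  have m₃ := four_dvd_form q₃
  obtain ⟨S, hS⟩ : ∃ S, (c₀ ^ 2 + 3 * d₀ ^ 2) + (c₁ ^ 2 + 3 * d₁ ^ 2) + (c₂ ^ 2 + 3 * d₂ ^ 2) +
      (c₃ ^ 2 + 3 * d₃ ^ 2) = S := ⟨_, rfl⟩
  have hQ : 4 * (e₀ ^ 2 + 3 * f₀ ^ 2 + e₁ ^ 2 + 3 * f₁ ^ 2 + e₂ ^ 2 + 3 * f₂ ^ 2 +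
      e₃ ^ 2 + 3 * f₃ ^ 2) + S * s = 40 + 8 * s := by
    rw [← hS]; linarith
  have hA := amgm_four e₀ f₀ e₁ f₁ e₂ f₂ e₃ f₃
  have hS0 : 0 ≤ S := by omega
  have hS12 : S ≤ 12 := by
    have hSs : (S - 8) * s ≤ 40 := by
      linarith [sq_nonneg e₀, sq_nonneg e₁, sq_nonneg e₂, sq_nonneg e₃, sq_nonneg f₀,
        sq_nonneg f₁, sq_nonneg f₂, sq_nonneg f₃]
    by_contra! h
    nlinarith only [hSs, h, hs]
  obtain rfl | rfl | rfl | rfl : S = 0 ∨ S = 4 ∨ S = 8 ∨ S = 12 := by omega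
  · obtain ⟨rfl, rfl⟩ := shape_zero (c := c₀) (d := d₀) (by omega)
    obtain ⟨rfl, rfl⟩ := shape_zero (c := c₁) (d := d₁) (by omega)
    obtain ⟨rfl, rfl⟩ := shape_zero (c := c₂) (d := d₂) (by omega)
    obtain ⟨rfl, rfl⟩ := shape_zero (c := c₃) (d := d₃) (by omega)
    simp at h3
  · rcases shape_four s₀ s₁ s₂ s₃ o₁ o₂ o₃ hS with
      ⟨⟨rfl, rfl⟩, ⟨rfl, rfl⟩, ⟨rfl, rfl⟩, ⟨rfl, rfl⟩⟩ |
      ⟨⟨⟨rfl, rfl⟩, ⟨rfl, rfl⟩⟩ | ⟨h, ⟨rfl, rfl⟩⟩, ⟨rfl, rfl⟩, ⟨rfl, rfl⟩⟩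
    · omega
    · omega
    · rcases h with ⟨rfl, rfl⟩ | ⟨rfl, rfl⟩ | ⟨rfl, rfl⟩
      · omega
      · have : 4 * (e₀ * f₀ + e₁ * f₁ + e₂ * f₂ + e₃ * f₃) = 8 + s := by linarith
        omega
      · have : 4 * (e₀ * f₀ + e₁ * f₁ + e₂ * f₂ + e₃ * f₃) = 8 + 3 * s := by linarith
        omega
  -- the values `cᵢ² + 3dᵢ²` are multiples of 4 other than 8, so two of them equal 4
  · have n₀ : c₀ ^ 2 + 3 * d₀ ^ 2 ≤ 6 := by
      by_contra! h
      exact form_ne_eight c₀ d₀ (by omega)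
    obtain ⟨rfl, rfl⟩ := shape_zero (c := c₂) (d := d₂) (by omega)
    obtain ⟨rfl, rfl⟩ := shape_zero (c := c₃) (d := d₃) (by omega)
    have hP : 4 * (e₀ * f₀ + e₁ * f₁ + e₂ * f₂ + e₃ * f₃) + s * (c₀ * d₀ + c₁ * d₁) =
      8 + 2 * s := by linarith
    rcases entry_cases s₀ n₀ with ⟨rfl, rfl⟩ | ⟨rfl, rfl⟩ | ⟨rfl, rfl⟩ | ⟨rfl, rfl⟩ | ⟨rfl, rfl⟩ |
      ⟨rfl, rfl⟩ <;>
    rcases entry_cases s₁ (by omega) with ⟨rfl, rfl⟩ | ⟨rfl, rfl⟩ | ⟨rfl, rfl⟩ | ⟨rfl, rfl⟩ |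
      ⟨rfl, rfl⟩ | ⟨rfl, rfl⟩ <;> try omega
    obtain rfl : f₁ = - f₀ := by linarith
    obtain rfl : e₁ = 1 - e₀ := by linarith
    -- the shape of the representation by five squares
    exact core_two (e := e₀) (f := f₀) (x := e₂) (y := f₂) (z := e₃) (t := f₃)
      (by linarith) (by linarith)
  -- here `s = 10` and all `aᵢ`, `bᵢ` vanish
  · have hz : e₀ ^ 2 + 3 * f₀ ^ 2 + e₁ ^ 2 + 3 * f₁ ^ 2 + e₂ ^ 2 + 3 * f₂ ^ 2 +
      e₃ ^ 2 + 3 * f₃ ^ 2 ≤ 0 := by linarith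
    have z₀ := shape_zero (c := e₀) (d := f₀) (by
      linarith [sq_nonneg e₁, sq_nonneg f₁, sq_nonneg e₂, sq_nonneg f₂, sq_nonneg e₃, sq_nonneg f₃])
    have z₁ := shape_zero (c := e₁) (d := f₁) (by
      linarith [sq_nonneg e₀, sq_nonneg f₀, sq_nonneg e₂, sq_nonneg f₂, sq_nonneg e₃, sq_nonneg f₃])
    have z₂ := shape_zero (c := e₂) (d := f₂) (by
      linarith [sq_nonneg e₀, sq_nonneg f₀, sq_nonneg e₁, sq_nonneg f₁, sq_nonneg e₃, sq_nonneg f₃])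
    have z₃ := shape_zero (c := e₃) (d := f₃) (by
      linarith [sq_nonneg e₀, sq_nonneg f₀, sq_nonneg e₁, sq_nonneg f₁, sq_nonneg e₂, sq_nonneg f₂])
    simp [z₀, z₁, z₂, z₃] at h3

set_option maxHeartbeats 1000000 in
/-- Case `s ≡ 3 (mod 4)`: with the parity conditions `a ≡ d` and `b ≡ c` modulo 2, the equations expressing
`4α = ∑ (2xᵢ)²` have no integer solution. -/
theorem no_solution_three {s : ℤ} (hs : 11 ≤ s) (a b c d : Fin 4 → ℤ)
    (hpar : ∀ i, 2 ∣ a i - d i ∧ 2 ∣ b i - c i)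
    (h1 : ∑ i, (a i ^ 2 + 3 * b i ^ 2 + s * (c i ^ 2 + 3 * d i ^ 2)) = 46 + 2 * s)
    (h2 : ∑ i, (a i * b i + s * (c i * d i)) = 10)
    (h3 : ∑ i, (a i * c i + 3 * (b i * d i)) = 2)
    (h4 : ∑ i, (a i * d i + b i * c i) = 2) : False := by
  obtain ⟨a', b', c', d', hsgn, hord, hsum, hp⟩ := exists_normalized a b c d
  rw [← hsum (fun x y z t => x ^ 2 + 3 * y ^ 2 + s * (z ^ 2 + 3 * t ^ 2)) (by intros; ring)] at h1
  rw [← hsum (fun x y z t => x * y + s * (z * t)) (by intros; ring)] at h2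
  rw [← hsum (fun x y z t => x * z + 3 * (y * t)) (by intros; ring)] at h3
  rw [← hsum (fun x y z t => x * t + y * z) (by intros; ring)] at h4
  have hpar' := hp (fun x y z t => 2 ∣ x - t ∧ 2 ∣ y - z) (by intros; omega) hpar
  simp only [Fin.sum_univ_four] at h1 h2 h3 h4
  have o₁ := hord 0 1 (by decide)
  have o₂ := hord 1 2 (by decide)
  have o₃ := hord 2 3 (by decide)
  obtain ⟨⟨e₀, he₀⟩, ⟨f₀, hf₀⟩⟩ := hpar' 0
  obtain ⟨⟨e₁, he₁⟩, ⟨f₁, hf₁⟩⟩ := hpar' 1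
  obtain ⟨⟨e₂, he₂⟩, ⟨f₂, hf₂⟩⟩ := hpar' 2
  obtain ⟨⟨e₃, he₃⟩, ⟨f₃, hf₃⟩⟩ := hpar' 3
  have s₀ := hsgn 0
  have s₁ := hsgn 1
  have s₂ := hsgn 2
  have s₃ := hsgn 3
  clear hpar' hsgn hord hsum hp hpar
  rw [sub_eq_iff_eq_add] at he₀ hf₀ he₁ hf₁ he₂ hf₂ he₃ hf₃
  rw [he₀, hf₀, he₁, hf₁, he₂, hf₂, he₃, hf₃] at h1 h2 h3 h4
  generalize c' 0 = c₀ at *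
  generalize c' 1 = c₁ at *
  generalize c' 2 = c₂ at *
  generalize c' 3 = c₃ at *
  generalize d' 0 = d₀ at *
  generalize d' 1 = d₁ at *
  generalize d' 2 = d₂ at *
  generalize d' 3 = d₃ at *
  have p₃ : 0 ≤ c₃ ^ 2 + 3 * d₃ ^ 2 := by positivity
  obtain ⟨S, hS⟩ : ∃ S, (c₀ ^ 2 + 3 * d₀ ^ 2) + (c₁ ^ 2 + 3 * d₁ ^ 2) + (c₂ ^ 2 + 3 * d₂ ^ 2) +
      (c₃ ^ 2 + 3 * d₃ ^ 2) = S := ⟨_, rfl⟩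
  have hS0 : 0 ≤ S := by omega
  have hSs : (S - 2) * s ≤ 46 := by
    rw [← hS]
    linarith [sq_nonneg (2 * e₀ + d₀), sq_nonneg (2 * e₁ + d₁), sq_nonneg (2 * e₂ + d₂),
      sq_nonneg (2 * e₃ + d₃), sq_nonneg (2 * f₀ + c₀), sq_nonneg (2 * f₁ + c₁),
      sq_nonneg (2 * f₂ + c₂), sq_nonneg (2 * f₃ + c₃)]
  have hS6 : S ≤ 6 := by
    by_contra! h
    nlinarith only [hSs, h, hs]
  -- the equation for `√s`, or for `√3·√s`, shows that `S` is even
  have hev : S + 2 * (e₀ * d₀ + f₀ * c₀ + (e₁ * d₁ + f₁ * c₁) + (e₂ * d₂ + f₂ * c₂) +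
      (e₃ * d₃ + f₃ * c₃) - d₀ ^ 2 - d₁ ^ 2 - d₂ ^ 2 - d₃ ^ 2) = 2 := by
    rw [← hS]; linarith
  obtain rfl | rfl | rfl | rfl : S = 0 ∨ S = 2 ∨ S = 4 ∨ S = 6 := by omega
  · obtain ⟨rfl, rfl⟩ := shape_zero (c := c₀) (d := d₀) (by omega)
    obtain ⟨rfl, rfl⟩ := shape_zero (c := c₁) (d := d₁) (by omega)
    obtain ⟨rfl, rfl⟩ := shape_zero (c := c₂) (d := d₂) (by omega)
    obtain ⟨rfl, rfl⟩ := shape_zero (c := c₃) (d := d₃) (by omega)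
    simp at h3
  · obtain ⟨⟨rfl, rfl⟩, ⟨rfl, rfl⟩, ⟨rfl, rfl⟩, ⟨rfl, rfl⟩⟩ := shape_two s₀ s₁ s₂ s₃ o₁ o₂ o₃ hS
    obtain rfl : e₁ = 1 - e₀ := by linarith
    obtain rfl : f₁ = - f₀ := by linarith
    -- the shape of the representation by five squares
    exact core_two (e := e₀) (f := f₀) (x := e₂) (y := f₂) (z := e₃) (t := f₃)
      (by linarith) (by linarith)
  · rcases shape_four s₀ s₁ s₂ s₃ o₁ o₂ o₃ hS with
      ⟨⟨rfl, rfl⟩, ⟨rfl, rfl⟩, ⟨rfl, rfl⟩, ⟨rfl, rfl⟩⟩ |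
      ⟨⟨⟨rfl, rfl⟩, ⟨rfl, rfl⟩⟩ | ⟨h, ⟨rfl, rfl⟩⟩, ⟨rfl, rfl⟩, ⟨rfl, rfl⟩⟩
    · linarith [amgm_four e₀ f₀ e₁ f₁ e₂ f₂ e₃ f₃]
    · obtain rfl : e₁ = 1 - 3 * f₀ := by linarith
      obtain rfl : f₁ = - e₀ := by linarith
      have hA := amgm e₂ f₂ e₃ f₃
      have hQ0 : 0 ≤ e₂ ^ 2 + 3 * f₂ ^ 2 + e₃ ^ 2 + 3 * f₃ ^ 2 := by positivity
      have hQ : 4 * e₀ ^ 2 - 2 * e₀ + 12 * f₀ ^ 2 - 6 * f₀ +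
        (e₂ ^ 2 + 3 * f₂ ^ 2 + e₃ ^ 2 + 3 * f₃ ^ 2) ≤ 4 := by linarith
      have hP : e₂ * f₂ + e₃ * f₃ = 2 + e₀ + f₀ - 4 * (e₀ * f₀) := by linarith
      have hf : f₀ = 0 := by
        have h1 : f₀ < 1 := by nlinarith [sq_nonneg (4 * e₀ - 1)]
        have h2 : -1 < f₀ := by nlinarith [sq_nonneg (4 * e₀ - 1)]
        omega
      subst hf
      have h1 : e₀ < 2 := by nlinarith
      have h2 : -1 < e₀ := by nlinarith
      interval_cases e₀ <;> omega
    · rcases h with ⟨rfl, rfl⟩ | ⟨rfl, rfl⟩ | ⟨rfl, rfl⟩ <;> omega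
  -- here `∑ (aᵢ² + 3bᵢ²) = 46 - 4s` leaves only `s = 11`, with the sum equal to 2; then
  -- `∑ aᵢbᵢ = 0` by `amgm`, which is incompatible with `∑ aᵢbᵢ ≡ 10 (mod 11)`
  · have hs11 : s = 11 := by omega
    subst hs11
    have hA := amgm_four (2 * e₀ + d₀) (2 * f₀ + c₀) (2 * e₁ + d₁) (2 * f₁ + c₁)
      (2 * e₂ + d₂) (2 * f₂ + c₂) (2 * e₃ + d₃) (2 * f₃ + c₃)
    have hB := amgm_four (-(2 * e₀ + d₀)) (2 * f₀ + c₀) (-(2 * e₁ + d₁)) (2 * f₁ + c₁)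
      (-(2 * e₂ + d₂)) (2 * f₂ + c₂) (-(2 * e₃ + d₃)) (2 * f₃ + c₃)
    obtain ⟨P, hP⟩ : ∃ P, (2 * e₀ + d₀) * (2 * f₀ + c₀) + (2 * e₁ + d₁) * (2 * f₁ + c₁) +
      (2 * e₂ + d₂) * (2 * f₂ + c₂) + (2 * e₃ + d₃) * (2 * f₃ + c₃) = P := ⟨_, rfl⟩
    have i1 : 17 * P ≤ 10 := by linarith
    have i2 : -10 ≤ 17 * P := by linarith
    have i3 : P + 11 * (c₀ * d₀ + c₁ * d₁ + c₂ * d₂ + c₃ * d₃) = 10 := by linarith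
    omega

/-! ### The field `ℚ(√3, √s)` -/

/-- The algebra `ℚ[X, Y]/(X² - 3, Y² - s)`, a tower of two quadratic algebras, used as an abstract
model of `ℚ(√3, √s)` on which all conjugations are visible. -/
abbrev BiqAlg (s : ℕ) : Type := QuadraticAlgebra (QuadraticAlgebra ℚ 3 0) (s : QuadraticAlgebra ℚ 3 0) 0

/-- Evaluation of `BiqAlg s` at real square roots `r` of `3` and `t` of `s`; the four sign choices
give the four embeddings of `K`. -/
noncomputable def biqEval (s : ℕ) (r t : ℝ) (hr : r ^ 2 = 3) (ht : t ^ 2 = s) : BiqAlg s →+* ℝ where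
  toFun y := y.re.re + y.re.im * r + (y.im.re + y.im.im * r) * t
  map_one' := by simp [QuadraticAlgebra.re_one, QuadraticAlgebra.im_one]
  map_zero' := by simp
  map_add' x y := by simp; ring
  map_mul' x y := by
    have hs : (s : QuadraticAlgebra ℚ 3 0) = ⟨s, 0⟩ := rfl
    simp only [QuadraticAlgebra.re_mul, QuadraticAlgebra.im_mul, QuadraticAlgebra.re_add,
      QuadraticAlgebra.im_add, QuadraticAlgebra.re_zero, QuadraticAlgebra.im_zero, hs]
    push_cast
    rw [← ht]
    linear_combination (-(x.re.im : ℝ) * y.re.im - t * (x.re.im * y.im.im + x.im.im * y.re.im)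
      - t ^ 2 * x.im.im * y.im.im) * hr

theorem irrational_sqrt_of_squarefree_s16 {n : ℕ} (hn : Squarefree n) (h1 : n ≠ 1) :
    Irrational (√n) := by
  rw [irrational_sqrt_natCast_iff]
  rintro ⟨r, rfl⟩
  have := Nat.isUnit_iff.1 (hn r dvd_rfl)
  simp [this] at h1

theorem squarefree_three_mul {s : ℕ} (hs : Squarefree s) (hnd : ¬ 3 ∣ s) :
    Squarefree (3 * s) :=
  (Nat.squarefree_mul ((Nat.Prime.coprime_iff_not_dvd Nat.prime_three).2 hnd)).2
    ⟨Nat.prime_three.prime.squarefree, hs⟩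

/-- `1` and an irrational number are linearly independent over `ℚ`. -/
theorem rat_lin_indep {r : ℝ} (hr : Irrational r) {p q : ℚ} (h : (p : ℝ) + q * r = 0) :
    p = 0 ∧ q = 0 := by
  have hq : q = 0 := by
    by_contra hq
    have hq' : (q : ℝ) ≠ 0 := by exact_mod_cast hq
    apply hr
    refine ⟨-p / q, ?_⟩
    push_cast
    field_simp
    linarith
  subst hq
  simpa using h

/-- `1, √3, √s, √3·√s` are linearly independent over `ℚ`: otherwise `√s ∈ ℚ(√3)`, which makes
`√s` or `√(3s)` rational. -/
theorem biq_lin_indep {s : ℕ} (hs : Squarefree s) (hs3 : 3 < s) (hnd : ¬ 3 ∣ s)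
    {p q u v : ℚ} (h : (p : ℝ) + q * √3 + (u + v * √3) * √s = 0) :
    p = 0 ∧ q = 0 ∧ u = 0 ∧ v = 0 := by
  have i3 : Irrational (√3) := by
    simpa using irrational_sqrt_of_squarefree_s16 Nat.prime_three.prime.squarefree (by norm_num)
  have is := irrational_sqrt_of_squarefree_s16 hs (by omega)
  have i3s := irrational_sqrt_of_squarefree_s16 (squarefree_three_mul hs hnd) (by omega)
  have q3 : √3 ^ 2 = (3 : ℝ) := Real.sq_sqrt (by norm_num)
  have qs : √(s : ℝ) ^ 2 = s := Real.sq_sqrt (by positivity)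
  by_cases huv : (u : ℝ) + v * √3 = 0
  · rw [huv, zero_mul, add_zero] at h
    have h1 := rat_lin_indep i3 h
    have h2 := rat_lin_indep i3 huv
    exact ⟨h1.1, h1.2, h2.1, h2.2⟩
  exfalso
  have hN : u ^ 2 - 3 * v ^ 2 ≠ 0 := by
    intro h0
    have h0' : (u : ℝ) ^ 2 - 3 * v ^ 2 = 0 := by exact_mod_cast h0
    have h1 : ((u : ℝ) + v * √3) * (u + (-v : ℚ) * √3) = 0 := by
      push_cast
      linear_combination h0' - (v : ℝ) ^ 2 * q3
    have h2 := rat_lin_indep i3 ((mul_eq_zero.1 h1).resolve_left huv)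
    apply huv
    simp [h2.1, neg_eq_zero.1 h2.2]
  have hN' : (u : ℝ) ^ 2 - 3 * v ^ 2 ≠ 0 := by exact_mod_cast hN
  obtain ⟨m, hm⟩ : ∃ m : ℚ, m = -(p * u - 3 * q * v) / (u ^ 2 - 3 * v ^ 2) := ⟨_, rfl⟩
  obtain ⟨n, hn⟩ : ∃ n : ℚ, n = -(q * u - p * v) / (u ^ 2 - 3 * v ^ 2) := ⟨_, rfl⟩
  have key : √(s : ℝ) = m + n * √3 := by
    rw [hm, hn]
    push_cast
    field_simp
    linear_combination (u - v * √3) * h + (-(q : ℝ) * v * 0 + v ^ 2 * √s + q * v) * q3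
  have h2 : ((m ^ 2 + 3 * n ^ 2 - s : ℚ) : ℝ) + (2 * m * n : ℚ) * √3 = 0 := by
    push_cast
    rw [key] at qs
    linear_combination qs - (n : ℝ) ^ 2 * q3
  have h3 := (rat_lin_indep i3 h2).2
  rcases mul_eq_zero.1 h3 with h4 | h4
  · have hm0 : m = 0 := by simpa using h4
    apply i3s
    refine ⟨3 * n, ?_⟩
    push_cast
    rw [Real.sqrt_mul (by norm_num), key, hm0]
    push_cast
    linear_combination - (n : ℝ) * q3
  · apply is
    exact ⟨m, by rw [key, h4]; simp⟩

theorem exists_int_of_isIntegral {q : ℚ} {x : ℝ} (hx : IsIntegral ℤ x) (hq : x = q) :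
    ∃ n : ℤ, q = n := by
  subst hq
  have h : IsIntegral ℤ (algebraMap ℚ ℝ q) := hx
  rw [isIntegral_algebraMap_iff (algebraMap ℚ ℝ).injective] at h
  obtain ⟨n, hn⟩ := IsIntegrallyClosed.algebraMap_eq_of_integral h
  exact ⟨n, by simpa using hn.symm⟩

/-- A rational `r` with `D r² ∈ ℤ` and `D` squarefree is an integer. -/
theorem exists_int_of_sq_mul {D : ℕ} (hD : Squarefree D) {r : ℚ} {n : ℤ}
    (h : D * r ^ 2 = n) : ∃ k : ℤ, r = k := by
  have hD0 : (D : ℚ) ≠ 0 := by exact_mod_cast hD.ne_zero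
  have hint : IsIntegral ℤ (D * r) := by
    apply IsIntegral.of_pow (n := 2) (by norm_num)
    have : ((D : ℚ) * r) ^ 2 = ((D * n : ℤ) : ℚ) := by
      push_cast
      rw [← h]; ring
    rw [this]
    exact isIntegral_algebraMap (R := ℤ) (A := ℚ)
  obtain ⟨k, hk⟩ := IsIntegrallyClosed.algebraMap_eq_of_integral hint
  have hk' : (k : ℚ) = D * r := by simpa using hk
  have hk2 : k ^ 2 = D * n := by
    have : (k : ℚ) ^ 2 = D * n := by rw [hk', ← h]; ring
    exact_mod_cast this
  have hDi : Squarefree (D : ℤ) := Int.squarefree_natCast.2 hD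
  obtain ⟨j, rfl⟩ := (hDi.dvd_pow_iff_dvd (by norm_num : 2 ≠ 0)).1 ⟨n, hk2⟩
  refine ⟨j, ?_⟩
  push_cast at hk'
  exact (mul_left_cancel₀ hD0 hk').symm

/-- Every element of `ℚ(√3, √s)` is the value of an element of `BiqAlg s`. -/
theorem exists_biqAlg {s : ℕ} {x : ℝ} (hx : x ∈ biqField 3 s) (h3 : √3 ^ 2 = (3 : ℝ))
    (hs : √(s : ℝ) ^ 2 = s) : ∃ y, biqEval s (√3) (√s) h3 hs y = x := by
  have halg : ∀ z ∈ ({√((3 : ℕ) : ℝ), √(s : ℝ)} : Set ℝ), IsAlgebraic ℚ z := by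
    have key : ∀ n : ℕ, IsAlgebraic ℚ √(n : ℝ) := by
      intro n
      refine IsIntegral.isAlgebraic (IsIntegral.of_pow (n := 2) (by norm_num) ?_)
      rw [Real.sq_sqrt (by positivity)]
      simpa using isIntegral_algebraMap (R := ℚ) (A := ℝ) (x := (n : ℚ))
    rintro z (rfl | rfl) <;> exact key _
  have hx' : x ∈ (biqField 3 s).toSubalgebra := hx
  rw [biqField, IntermediateField.adjoin_toSubalgebra_of_isAlgebraic halg] at hx'
  have hle : Algebra.adjoin ℚ ({√((3 : ℕ) : ℝ), √(s : ℝ)} : Set ℝ) ≤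
      (biqEval s (√3) (√s) h3 hs).toRatAlgHom.range := by
    apply Algebra.adjoin_le
    rintro z (rfl | rfl)
    · exact ⟨⟨⟨0, 1⟩, 0⟩, by simp [biqEval]⟩
    · exact ⟨⟨0, ⟨1, 0⟩⟩, by simp [biqEval]⟩
  exact hle hx'

/-! ### Integers of `ℚ(√3, √s)` -/

/-- An integer of `K` has rational coordinates in the basis `1, √3, √s, √3·√s`, and all its
conjugates are integral. Integrality transfers to `BiqAlg s` because `biqEval` is injective at
`(√3, √s)`, and from there to every other sign choice. -/
theorem conj_integral_s16 {s : ℕ} (hs : Squarefree s) (hs3 : 3 < s) (hnd : ¬ 3 ∣ s) {x : ℝ}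
    (hx : x ∈ ringOfInt (biqField 3 s)) : ∃ p q u v : ℚ,
    x = p + q * √3 + (u + v * √3) * √s ∧
    ∀ r t : ℝ, r ^ 2 = 3 → t ^ 2 = s → IsIntegral ℤ (p + q * r + (u + v * r) * t) := by
  have q3 : √3 ^ 2 = (3 : ℝ) := Real.sq_sqrt (by norm_num)
  have qs : √(s : ℝ) ^ 2 = s := Real.sq_sqrt (by positivity)
  obtain ⟨y, rfl⟩ := exists_biqAlg hx.1 q3 qs
  have hinj : Function.Injective (biqEval s (√3) (√s) q3 qs) := by
    rw [injective_iff_map_eq_zero]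
    intro z hz
    obtain ⟨h1, h2, h3, h4⟩ := biq_lin_indep hs hs3 hnd hz
    ext <;> simpa
  have hy : IsIntegral ℤ y :=
    (isIntegral_algHom_iff (biqEval s (√3) (√s) q3 qs).toIntAlgHom hinj).1 hx.2
  refine ⟨y.re.re, y.re.im, y.im.re, y.im.im, rfl, fun r t hr ht => ?_⟩
  exact hy.map (biqEval s r t hr ht).toIntAlgHom

theorem even_of_four_dvd {a b D m : ℤ} (hD : D % 4 = 3) (h : a ^ 2 - D * b ^ 2 = 4 * m) :
    2 ∣ a ∧ 2 ∣ b := by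
  have h4 : (a ^ 2 - D * b ^ 2) % 4 = 0 := by omega
  have ha : a % 4 = 0 ∨ a % 4 = 1 ∨ a % 4 = 2 ∨ a % 4 = 3 := by omega
  have hb : b % 4 = 0 ∨ b % 4 = 1 ∨ b % 4 = 2 ∨ b % 4 = 3 := by omega
  rcases ha with ha | ha | ha | ha <;> rcases hb with hb | hb | hb | hb <;>
    simp [pow_two, Int.sub_emod, Int.mul_emod, ha, hb, hD] at h4 <;> omega

theorem even_of_four_dvd_mul {a c D m : ℤ} (hD : D % 4 ≠ 0) (ha : 2 ∣ a)
    (h : a ^ 2 - D * c ^ 2 = 4 * m) : 2 ∣ c := by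
  obtain ⟨k, rfl⟩ := ha
  by_contra hc
  obtain ⟨j, rfl⟩ : ∃ j, c = 2 * j + 1 := ⟨c / 2, by omega⟩
  have : D = 4 * (k ^ 2 - m - D * (j ^ 2 + j)) := by linarith
  omega

/-- The norm of `(a + b√3 + (c + d√3)√s) / 2`, computed through the relative norm
`(a² + 3b² - s(c² + 3d²)) / 4 + (ab - scd) / 2 · √3` to `ℚ(√3)`. -/
theorem norm_identity {r t S a b c d : ℝ} (hr : r ^ 2 = 3) (ht : t ^ 2 = S) :
    (a / 2 + b / 2 * r + (c / 2 + d / 2 * r) * t) *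
      (a / 2 + b / 2 * r + (c / 2 + d / 2 * r) * -t) *
      ((a / 2 + b / 2 * -r + (c / 2 + d / 2 * -r) * t) *
      (a / 2 + b / 2 * -r + (c / 2 + d / 2 * -r) * -t)) =
    ((a ^ 2 + 3 * b ^ 2 - S * (c ^ 2 + 3 * d ^ 2)) / 4) ^ 2 -
      3 * ((a * b - S * (c * d)) / 2) ^ 2 := by
  subst ht
  have h1 : ∀ r : ℝ, r ^ 2 = 3 → (a / 2 + b / 2 * r + (c / 2 + d / 2 * r) * t) *
      (a / 2 + b / 2 * r + (c / 2 + d / 2 * r) * -t) =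
      (a ^ 2 + 3 * b ^ 2 - t ^ 2 * (c ^ 2 + 3 * d ^ 2)) / 4 +
        (a * b - t ^ 2 * (c * d)) / 2 * r := fun r hr => by
    linear_combination (b ^ 2 / 4 - t ^ 2 * d ^ 2 / 4) * hr
  rw [h1 r hr, h1 (-r) (by rw [neg_sq, hr])]
  linear_combination -((a * b - t ^ 2 * (c * d)) / 2) ^ 2 * hr

/-- Integers of `K` have half-integral coordinates satisfying the divisibilities that express the
integrality of the relative norm to `ℚ(√3)`. -/
theorem exists_coords_s16 {s : ℕ} (hs : Squarefree s) (hs3 : 3 < s) (hnd : ¬ 3 ∣ s)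
    (hs4 : s % 4 ≠ 0) {x : ℝ} (hx : x ∈ ringOfInt (biqField 3 s)) : ∃ a b c d : ℤ,
    x = (a + b * √3 + (c + d * √3) * √s) / 2 ∧
    4 ∣ a ^ 2 + 3 * b ^ 2 - s * (c ^ 2 + 3 * d ^ 2) ∧ 2 ∣ a * b - s * (c * d) := by
  obtain ⟨p, q, u, v, hxe, hconj⟩ := conj_integral_s16 hs hs3 hnd hx
  have q3 : √3 ^ 2 = (3 : ℝ) := Real.sq_sqrt (by norm_num)
  have qs : √(s : ℝ) ^ 2 = s := Real.sq_sqrt (by positivity)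
  have pp := hconj (√3) (√s) q3 qs
  have pm := hconj (√3) (-√s) q3 (by rw [neg_sq, qs])
  have mp := hconj (-√3) (√s) (by rw [neg_sq, q3]) qs
  have mm := hconj (-√3) (-√s) (by rw [neg_sq, q3]) (by rw [neg_sq, qs])
  -- the trace to `ℚ`, and the norms from the quadratic subfields of the three relative traces,
  -- show that `4p, 4q, 4u, 4v` are integers
  obtain ⟨a, ha⟩ := exists_int_of_isIntegral (q := 4 * p) ((pp.add pm).add (mp.add mm))
    (by push_cast; ring)
  obtain ⟨m₁, hm₁⟩ := exists_int_of_isIntegral (q := 4 * (p ^ 2 - 3 * q ^ 2))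
    ((pp.add pm).mul (mp.add mm)) (by push_cast; linear_combination -4 * (q : ℝ) ^ 2 * q3)
  obtain ⟨m₂, hm₂⟩ := exists_int_of_isIntegral (q := 4 * (p ^ 2 - s * u ^ 2))
    ((pp.add mp).mul (pm.add mm)) (by push_cast; linear_combination -4 * (u : ℝ) ^ 2 * qs)
  obtain ⟨m₃, hm₃⟩ := exists_int_of_isIntegral (q := 4 * (p ^ 2 - 3 * s * v ^ 2))
    ((pp.add mm).mul (pm.add mp)) (by
      push_cast
      linear_combination -4 * (v : ℝ) ^ 2 * (√s ^ 2 * q3 + 3 * qs))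
  obtain ⟨b, hb⟩ := exists_int_of_sq_mul (D := 3) Nat.prime_three.prime.squarefree (r := 4 * q)
    (n := a ^ 2 - 4 * m₁) (by push_cast; rw [← ha, ← hm₁]; ring)
  obtain ⟨c, hc⟩ := exists_int_of_sq_mul hs (r := 4 * u)
    (n := a ^ 2 - 4 * m₂) (by push_cast; rw [← ha, ← hm₂]; ring)
  obtain ⟨d, hd⟩ := exists_int_of_sq_mul (squarefree_three_mul hs hnd) (r := 4 * v)
    (n := a ^ 2 - 4 * m₃) (by push_cast; rw [← ha, ← hm₃]; ring)
  have e₁ : a ^ 2 - 3 * b ^ 2 = 4 * m₁ := by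
    have : (a : ℚ) ^ 2 - 3 * b ^ 2 = 4 * m₁ := by rw [← ha, ← hb, ← hm₁]; ring
    exact_mod_cast this
  have e₂ : a ^ 2 - (s : ℤ) * c ^ 2 = 4 * m₂ := by
    have : (a : ℚ) ^ 2 - s * c ^ 2 = 4 * m₂ := by rw [← ha, ← hc, ← hm₂]; ring
    exact_mod_cast this
  have e₃ : a ^ 2 - (3 * s : ℤ) * d ^ 2 = 4 * m₃ := by
    have : (a : ℚ) ^ 2 - (3 * s) * d ^ 2 = 4 * m₃ := by rw [← ha, ← hd, ← hm₃]; ring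
    exact_mod_cast this
  -- and modulo 4 these integers turn out to be even
  obtain ⟨⟨a, rfl⟩, ⟨b, rfl⟩⟩ := even_of_four_dvd (by norm_num) e₁
  obtain ⟨c, rfl⟩ := even_of_four_dvd_mul (by omega) ⟨a, rfl⟩ e₂
  obtain ⟨d, rfl⟩ := even_of_four_dvd_mul (by omega) ⟨a, rfl⟩ e₃
  push_cast at ha hb hc hd
  obtain rfl : p = a / 2 := by linarith
  obtain rfl : q = b / 2 := by linarith
  obtain rfl : u = c / 2 := by linarith
  obtain rfl : v = d / 2 := by linarith
  push_cast at hxe pp pm mp mm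
  -- `U` and `W` are the trace and the norm of the relative norm to `ℚ(√3)`
  obtain ⟨U, hU⟩ := exists_int_of_isIntegral
    (q := (a ^ 2 + 3 * b ^ 2 - s * (c ^ 2 + 3 * d ^ 2)) / 2)
    ((pp.mul pm).add (mp.mul mm)) (by
      push_cast
      linear_combination ((b : ℝ) ^ 2 / 2 - d ^ 2 / 2 * √s ^ 2) * q3 -
        ((c : ℝ) ^ 2 + 3 * d ^ 2) / 2 * qs)
  obtain ⟨W, hW⟩ := exists_int_of_isIntegral
    (q := ((a ^ 2 + 3 * b ^ 2 - s * (c ^ 2 + 3 * d ^ 2)) / 4) ^ 2 -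
      3 * ((a * b - s * (c * d)) / 2) ^ 2)
    ((pp.mul pm).mul (mp.mul mm)) (by
      push_cast
      exact norm_identity q3 qs)
  have hU' : a ^ 2 + 3 * b ^ 2 - s * (c ^ 2 + 3 * d ^ 2) = 2 * U := by
    have : (a : ℚ) ^ 2 + 3 * b ^ 2 - s * (c ^ 2 + 3 * d ^ 2) = 2 * U := by rw [← hU]; ring
    exact_mod_cast this
  have hW' : U ^ 2 - 3 * (a * b - s * (c * d)) ^ 2 = 4 * W := by
    have : (U : ℚ) ^ 2 - 3 * (a * b - s * (c * d)) ^ 2 = 4 * W := by rw [← hU, ← hW]; ring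
    exact_mod_cast this
  obtain ⟨hU2, hV2⟩ := even_of_four_dvd (by norm_num) hW'
  refine ⟨a, b, c, d, ?_, by omega, hV2⟩
  rw [hxe]; ring

theorem sq_emod_four (n : ℤ) : n ^ 2 % 4 = n % 2 := by
  rcases Int.even_or_odd' n with ⟨k, rfl | rfl⟩
  · have : (2 * k) ^ 2 = 4 * k ^ 2 := by ring
    omega
  · have : (2 * k + 1) ^ 2 = 4 * (k ^ 2 + k) + 1 := by ring
    omega

theorem mul_emod_two (m n : ℤ) : m * n % 2 = if m % 2 = 1 ∧ n % 2 = 1 then 1 else 0 := by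
  rw [Int.mul_emod]
  rcases Int.emod_two_eq_zero_or_one m with h | h <;>
    rcases Int.emod_two_eq_zero_or_one n with h' | h' <;> simp [h, h']

/-- The divisibilities of `exists_coords` as congruences modulo 2, for each residue of `s`
modulo 4. -/
theorem parity_cases {s a b c d : ℤ}
    (h1 : 4 ∣ a ^ 2 + 3 * b ^ 2 - s * (c ^ 2 + 3 * d ^ 2)) (h2 : 2 ∣ a * b - s * (c * d)) :
    (s % 4 = 1 → 2 ∣ a - c ∧ 2 ∣ b - d) ∧
    (s % 4 = 2 → 2 ∣ a ∧ 2 ∣ b ∧ 2 ∣ c - d) ∧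
    (s % 4 = 3 → 2 ∣ a - d ∧ 2 ∣ b - c) := by
  obtain ⟨k, r, hr, rfl⟩ : ∃ k r, r = s % 4 ∧ s = 4 * k + r := ⟨s / 4, s % 4, rfl, by omega⟩
  have h1' : 4 ∣ a ^ 2 + 3 * b ^ 2 - r * (c ^ 2 + 3 * d ^ 2) := by
    have e : a ^ 2 + 3 * b ^ 2 - r * (c ^ 2 + 3 * d ^ 2) =
        a ^ 2 + 3 * b ^ 2 - (4 * k + r) * (c ^ 2 + 3 * d ^ 2) + 4 * (k * (c ^ 2 + 3 * d ^ 2)) := by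
      ring
    rw [e]
    exact dvd_add h1 (dvd_mul_right _ _)
  have h2' : 2 ∣ a * b - r * (c * d) := by
    have e : a * b - r * (c * d) = a * b - (4 * k + r) * (c * d) + 2 * (2 * k * (c * d)) := by
      ring
    rw [e]
    exact dvd_add h2 (dvd_mul_right _ _)
  have ha := sq_emod_four a
  have hb := sq_emod_four b
  have hc := sq_emod_four c
  have hd := sq_emod_four d
  have hab := mul_emod_two a b
  have hcd := mul_emod_two c d
  rw [← hr]
  clear h1 h2
  refine ⟨?_, ?_, ?_⟩ <;> intro h <;> subst h <;> split_ifs at hab hcd <;> omega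

/-! ### Sums of four squares in coordinates -/

/-- A representation of `α` by four squares, written out in half-integral coordinates: the
coefficients of `1, √3, √s, √3·√s` in `4α` are `k₁, 2k₂, 2k₃, 2k₄`. -/
theorem sum_four_coords {s : ℕ} (hs : Squarefree s) (hs3 : 3 < s) (hnd : ¬ 3 ∣ s)
    (hs4 : s % 4 ≠ 0) {α : ℝ} {k₁ k₂ k₃ k₄ : ℤ}
    (hα : 4 * α = k₁ + (2 * k₂) * √3 + (2 * k₃ + (2 * k₄) * √3) * √s)
    (h : SumOfNSquaresIn (ringOfInt (biqField 3 s)) 4 α) : ∃ a b c d : Fin 4 → ℤ,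
    (∀ i, 4 ∣ a i ^ 2 + 3 * b i ^ 2 - s * (c i ^ 2 + 3 * d i ^ 2) ∧
      2 ∣ a i * b i - s * (c i * d i)) ∧
    ∑ i, (a i ^ 2 + 3 * b i ^ 2 + s * (c i ^ 2 + 3 * d i ^ 2)) = k₁ ∧
    ∑ i, (a i * b i + s * (c i * d i)) = k₂ ∧
    ∑ i, (a i * c i + 3 * (b i * d i)) = k₃ ∧
    ∑ i, (a i * d i + b i * c i) = k₄ := by
  obtain ⟨x, hx, hsum⟩ := h
  choose a b c d hxe h1 h2 using fun i => exists_coords_s16 hs hs3 hnd hs4 (hx i)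
  have q3 : √3 ^ 2 = (3 : ℝ) := Real.sq_sqrt (by norm_num)
  have qs : √(s : ℝ) ^ 2 = s := Real.sq_sqrt (by positivity)
  have hsq : ∀ i, 4 * x i ^ 2 = ((a i ^ 2 + 3 * b i ^ 2 + s * (c i ^ 2 + 3 * d i ^ 2) : ℤ) : ℝ) +
      2 * ((a i * b i + s * (c i * d i) : ℤ) : ℝ) * √3 +
      (2 * ((a i * c i + 3 * (b i * d i) : ℤ) : ℝ) +
        2 * ((a i * d i + b i * c i : ℤ) : ℝ) * √3) * √s := by
    intro i
    rw [hxe i]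
    push_cast
    linear_combination ((b i : ℝ) ^ 2 + d i ^ 2 * √s ^ 2 + 2 * b i * d i * √s) * q3 +
      ((c i : ℝ) ^ 2 + 2 * c i * d i * √3 + 3 * d i ^ 2) * qs
  rw [hsum, Finset.mul_sum, Finset.sum_congr rfl (fun i _ => hsq i)] at hα
  simp only [Finset.sum_add_distrib, ← Finset.sum_mul, ← Finset.mul_sum, ← Int.cast_sum] at hα
  refine ⟨a, b, c, d, fun i => ⟨h1 i, h2 i⟩, ?_⟩
  simp only [Finset.sum_add_distrib, ← Finset.mul_sum]
  simp only [Fin.sum_univ_four] at hα ⊢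
  obtain ⟨g1, g2, g3, g4⟩ := biq_lin_indep hs hs3 hnd
    (p := ((∑ i, (a i ^ 2 + 3 * b i ^ 2 + s * (c i ^ 2 + 3 * d i ^ 2)) - k₁ : ℤ) : ℚ))
    (q := ((2 * (∑ i, (a i * b i + s * (c i * d i)) - k₂) : ℤ) : ℚ))
    (u := ((2 * (∑ i, (a i * c i + 3 * (b i * d i)) - k₃) : ℤ) : ℚ))
    (v := ((2 * (∑ i, (a i * d i + b i * c i) - k₄) : ℤ) : ℚ)) (by
      simp only [Fin.sum_univ_four]
      push_cast at hα ⊢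
      linear_combination hα)
  simp only [Fin.sum_univ_four, Int.cast_eq_zero] at g1 g2 g3 g4
  refine ⟨by linarith, by linarith, by linarith, by linarith⟩

/-! ### The representation by five squares -/

theorem isIntegral_sqrt (n : ℕ) : IsIntegral ℤ √(n : ℝ) := by
  apply IsIntegral.of_pow (n := 2) (by norm_num)
  rw [Real.sq_sqrt (by positivity)]
  simpa using isIntegral_algebraMap (R := ℤ) (A := ℝ) (x := (n : ℤ))

/-- For `t² ≡ 1 (mod 4)` the number `(1 + t) / 2` is a root of `X² - X - k`. -/
theorem isIntegral_half {t : ℝ} {k : ℤ} (ht : t ^ 2 = 4 * k + 1) :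
    IsIntegral ℤ ((1 + t) / 2) := by
  refine ⟨Polynomial.X ^ 2 - Polynomial.X - Polynomial.C k, ?_, ?_⟩
  · monicity!
  · simp only [Polynomial.eval₂_sub, Polynomial.eval₂_X_pow, Polynomial.eval₂_X,
      Polynomial.eval₂_C]
    rw [eq_intCast]
    linear_combination ht / 4

theorem w_mem {s : ℕ} (hs4 : s % 4 ≠ 0) :
    (if s % 4 = 1 then (1 + Real.sqrt s) / 2
      else if s % 4 = 2 then (Real.sqrt s + Real.sqrt (3 * s)) / 2
      else (Real.sqrt 3 + Real.sqrt s) / 2) ∈ ringOfInt (biqField 3 s) := by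
  have q3 : √3 ^ 2 = (3 : ℝ) := Real.sq_sqrt (by norm_num)
  have qs : √(s : ℝ) ^ 2 = s := Real.sq_sqrt (by positivity)
  have m3 : √3 ∈ biqField 3 s := by
    apply IntermediateField.subset_adjoin; simp
  have ms : √(s : ℝ) ∈ biqField 3 s := by
    apply IntermediateField.subset_adjoin; simp
  have i3 : IsIntegral ℤ (√3 : ℝ) := by simpa using isIntegral_sqrt 3
  have is := isIntegral_sqrt s
  have iz : ∀ k : ℤ, IsIntegral ℤ (k : ℝ) := fun k => by
    simpa using isIntegral_algebraMap (R := ℤ) (A := ℝ) (x := k)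
  have hmul : √(3 * (s : ℝ)) = √3 * √s := Real.sqrt_mul (by norm_num) _
  have m2 : (2 : ℝ) ∈ biqField 3 s := ofNat_mem _ 2
  obtain ⟨m, hm⟩ : ∃ m, s = 4 * m + s % 4 := ⟨s / 4, by omega⟩
  have hsd : (s : ℝ) = 4 * m + (s % 4 : ℕ) := by exact_mod_cast hm
  split_ifs with h1 h2
  · refine ⟨div_mem (add_mem (one_mem _) ms) m2, isIntegral_half (k := m) ?_⟩
    rw [h1] at hsd
    rw [qs, hsd]; simp
  · rw [hmul]
    refine ⟨div_mem (add_mem ms (mul_mem m3 ms)) m2, IsIntegral.of_pow (n := 2) (by norm_num) ?_⟩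
    -- `w² = s + (s/2)√3` with `s / 2 = 2m + 1`
    have : ((√s + √3 * √s) / 2) ^ 2 = ((s : ℤ) : ℝ) + ((2 * m + 1 : ℤ) : ℝ) * √3 := by
      push_cast
      rw [h2] at hsd
      push_cast at hsd
      linear_combination (1 + √3) ^ 2 / 4 * qs + (s : ℝ) / 4 * q3 + √3 / 2 * hsd
    rw [this]
    exact (iz _).add ((iz _).mul i3)
  · have h3 : s % 4 = 3 := by omega
    refine ⟨div_mem (add_mem m3 ms) m2, IsIntegral.of_pow (n := 2) (by norm_num) ?_⟩
    rw [h3] at hsd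
    push_cast at hsd
    -- `w² = (s + 3)/4 + √(3s)/2`, where `(s + 3)/4 = m + 3/2` and `3s ≡ 1 (mod 4)`
    have : ((√3 + √s) / 2) ^ 2 = ((m + 1 : ℤ) : ℝ) + (1 + √3 * √s) / 2 := by
      push_cast
      linear_combination q3 / 4 + qs / 4 + hsd / 4
    rw [this]
    refine (iz _).add (isIntegral_half (k := 3 * m + 2) ?_)
    push_cast
    linear_combination √s ^ 2 * q3 + 3 * qs + 3 * hsd

theorem sum_five_mem {s : ℕ} {w : ℝ} (hw : w ∈ ringOfInt (biqField 3 s)) :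
    (1 ^ 2 + 1 ^ 2 + (2 + √3) ^ 2 + w ^ 2 + (1 + w) ^ 2) ∈ ringOfInt (biqField 3 s) ∧
    SumOfNSquaresIn (ringOfInt (biqField 3 s)) 5
      (1 ^ 2 + 1 ^ 2 + (2 + √3) ^ 2 + w ^ 2 + (1 + w) ^ 2) := by
  have m3 : √3 ∈ biqField 3 s := by
    apply IntermediateField.subset_adjoin; simp
  have i3 : IsIntegral ℤ (√3 : ℝ) := by simpa using isIntegral_sqrt 3
  have i2 : IsIntegral ℤ (2 : ℝ) := by
    simpa using isIntegral_algebraMap (R := ℤ) (A := ℝ) (x := 2)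
  have h1 : (1 : ℝ) ∈ ringOfInt (biqField 3 s) := ⟨one_mem _, isIntegral_one⟩
  have h2 : 2 + √3 ∈ ringOfInt (biqField 3 s) := ⟨add_mem (ofNat_mem _ 2) m3, i2.add i3⟩
  have h3 : 1 + w ∈ ringOfInt (biqField 3 s) := ⟨add_mem h1.1 hw.1, h1.2.add hw.2⟩
  refine ⟨⟨?_, ?_⟩, ![1, 1, 2 + √3, w, 1 + w], ?_, ?_⟩
  · exact add_mem (add_mem (add_mem (add_mem (pow_mem h1.1 2) (pow_mem h1.1 2)) (pow_mem h2.1 2))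
      (pow_mem hw.1 2)) (pow_mem h3.1 2)
  · exact ((((h1.2.pow 2).add (h1.2.pow 2)).add (h2.2.pow 2)).add (hw.2.pow 2)).add (h3.2.pow 2)
  · intro i
    fin_cases i <;> assumption
  · simp [Fin.sum_univ_five]

/-- Let `s > 3` be squarefree with `3 ∤ s` and `s ∉ {5, 7}`, and let
`K = ℚ(√3, √s)`. Then `P(O_K) ≥ 5`; indeed the element
`1² + 1² + (2+√3)² + w² + (1+w)²` is a sum of `5` squares in `O_K` but not of `4`,
where `w` depends on `s mod 4` as indicated. -/
theorem pythagoras_sqrt3_ge_five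
    (s : ℕ) (hs : Squarefree s) (hs3 : 3 < s) (hnd : ¬ (3 ∣ s))
    (h5 : s ≠ 5) (h7 : s ≠ 7) :
    (∃ α ∈ ringOfInt (biqField 3 s), IsSumOfSquaresIn (ringOfInt (biqField 3 s)) α ∧
      ¬ SumOfNSquaresIn (ringOfInt (biqField 3 s)) 4 α) ∧
    SumOfNSquaresIn (ringOfInt (biqField 3 s)) 5
      (1 ^ 2 + 1 ^ 2 + (2 + Real.sqrt 3) ^ 2 +
        (if s % 4 = 1 then (1 + Real.sqrt s) / 2
         else if s % 4 = 2 then (Real.sqrt s + Real.sqrt (3 * s)) / 2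
         else (Real.sqrt 3 + Real.sqrt s) / 2) ^ 2 +
        (1 + (if s % 4 = 1 then (1 + Real.sqrt s) / 2
              else if s % 4 = 2 then (Real.sqrt s + Real.sqrt (3 * s)) / 2
              else (Real.sqrt 3 + Real.sqrt s) / 2)) ^ 2) ∧
    ¬ SumOfNSquaresIn (ringOfInt (biqField 3 s)) 4
      (1 ^ 2 + 1 ^ 2 + (2 + Real.sqrt 3) ^ 2 +
        (if s % 4 = 1 then (1 + Real.sqrt s) / 2
         else if s % 4 = 2 then (Real.sqrt s + Real.sqrt (3 * s)) / 2
         else (Real.sqrt 3 + Real.sqrt s) / 2) ^ 2 +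
        (1 + (if s % 4 = 1 then (1 + Real.sqrt s) / 2
              else if s % 4 = 2 then (Real.sqrt s + Real.sqrt (3 * s)) / 2
              else (Real.sqrt 3 + Real.sqrt s) / 2)) ^ 2) := by
  have hs4 : s % 4 ≠ 0 := by
    intro h
    have := hs 2 (by omega)
    simp at this
  have h9 : s ≠ 9 := by
    rintro rfl
    have := hs 3 (by norm_num)
    simp at this
  have hw := w_mem hs4
  have q3 : √3 ^ 2 = (3 : ℝ) := Real.sq_sqrt (by norm_num)
  have qs : √(s : ℝ) ^ 2 = s := Real.sq_sqrt (by positivity)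
  have hmul : √(3 * (s : ℝ)) = √3 * √s := Real.sqrt_mul (by norm_num) _
  have h5sq := sum_five_mem hw
  -- `α` itself is the witness for the first conjunct
  suffices hno : ¬ SumOfNSquaresIn (ringOfInt (biqField 3 s)) 4
      (1 ^ 2 + 1 ^ 2 + (2 + Real.sqrt 3) ^ 2 +
        (if s % 4 = 1 then (1 + Real.sqrt s) / 2
         else if s % 4 = 2 then (Real.sqrt s + Real.sqrt (3 * s)) / 2
         else (Real.sqrt 3 + Real.sqrt s) / 2) ^ 2 +
        (1 + (if s % 4 = 1 then (1 + Real.sqrt s) / 2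
              else if s % 4 = 2 then (Real.sqrt s + Real.sqrt (3 * s)) / 2
              else (Real.sqrt 3 + Real.sqrt s) / 2)) ^ 2) from
    ⟨⟨_, h5sq.1, ⟨5, h5sq.2⟩, hno⟩, h5sq.2, hno⟩
  clear h5sq hw
  intro h
  rw [hmul] at h
  split_ifs at h with h1 h2
  · obtain ⟨a, b, c, d, hp, e1, e2, e3, e4⟩ := sum_four_coords hs hs3 hnd hs4
      (k₁ := 46 + 2 * s) (k₂ := 8) (k₃ := 4) (k₄ := 0) (by
        push_cast
        linear_combination 4 * q3 + 2 * qs) h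
    exact no_solution_one (s := s) (by omega) a b c d
      (fun i => (parity_cases (hp i).1 (hp i).2).1 (by omega)) e1 e2 e3 e4
  · obtain ⟨a, b, c, d, hp, e1, e2, e3, e4⟩ := sum_four_coords hs hs3 hnd hs4
      (k₁ := 40 + 8 * s) (k₂ := 8 + 2 * s) (k₃ := 2) (k₄ := 2) (by
        push_cast
        linear_combination (4 + 2 * (s : ℝ)) * q3 + 2 * (1 + √3) ^ 2 * qs) h
    exact no_solution_two (s := s) (by omega) (by omega) a b c d
      (fun i => (parity_cases (hp i).1 (hp i).2).2.1 (by omega)) e1 e2 e3 e4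
  · obtain ⟨a, b, c, d, hp, e1, e2, e3, e4⟩ := sum_four_coords hs hs3 hnd hs4
      (k₁ := 46 + 2 * s) (k₂ := 10) (k₃ := 2) (k₄ := 2) (by
        push_cast
        linear_combination 6 * q3 + 2 * qs) h
    exact no_solution_three (s := s) (by omega) a b c d
      (fun i => (parity_cases (hp i).1 (hp i).2).2.2 (by omega)) e1 e2 e3 e4
end
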